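/- arXiv:2207.05156 — 3 statements merged into one kernel-verified Lean document; each statement's English description precedes it below -/
import Mathlib

section
/- Fix an integer k ≥ 1, a probability mass function π on the nonnegative integers with π_k > 0, and real numbers p_i with 0 < p_i < 1 for all i ≥ k+1. Set s_0(k+1,k+j) = ∏_{i=k+1}^{k+j} (1−p_i) and define, for t ∈ (0,1], S_0(t,k) = (∑_{j≥0} π_{k+j} C(k+j,k) (1−t)^j s_0(k+1,k+j)) / (∑_{j≥0} π_{k+j} C(k+j,k) (1−t)^j), where C(·,·) is the binomial coefficient. Then t ↦ S_0(t,k) is nondecreasing on (0,1], and it is strictly increasing on (0,1] if ∑_{j=k+1}^{∞} π_j > 0. -/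
/-- `s₀(k+1, k+j)`: the probability of zero successes among trials `k+1, …, k+j`. -/
noncomputable def s0 (p : ℕ → ℝ) (k j : ℕ) : ℝ :=
  ∏ i ∈ Finset.Ico (k + 1) (k + j + 1), (1 - p i)

/-- `S₀(t,k)`: the conditional probability of no successes after time `t` given
`k` trials on `[0,t]`, as a normalized power series in `1-t`. -/
noncomputable def S0 (pi : ℕ → ℝ) (p : ℕ → ℝ) (k : ℕ) (t : ℝ) : ℝ :=
  (∑' j : ℕ, pi (k + j) * ((k + j).choose k : ℝ) * (1 - t) ^ j * s0 p k j) /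
    (∑' j : ℕ, pi (k + j) * ((k + j).choose k : ℝ) * (1 - t) ^ j)

/-!
`S₀(t,k)` is the mean of the decreasing sequence `j ↦ s₀(k+1,k+j)` with respect to weights
proportional to `a j * x ^ j`, where `x = 1 - t`. For `y ≤ x` the weights `a j * x ^ j` dominate
the weights `a j * y ^ j` in the likelihood-ratio order, so the mean of a decreasing function
drops as `x` grows. The comparison of the two means is Chebyshev's: cross-multiplied and
symmetrized over pairs of indices, their difference is a sum of terms of constant sign.
-/

section WeightedMean

variable {ι : Type*} {u v w : ι → ℝ}

/-- The mean of `w` under the (unnormalized) weights `u`; it is meaningful when `u` and `u * w`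
are summable and `∑' i, u i ≠ 0`. -/
noncomputable def weightedMean (u w : ι → ℝ) : ℝ :=
  (∑' i, u i * w i) / ∑' i, u i

theorem hasSum_mul_add_mul_swap (hu : Summable u) (hv : Summable v) :
    HasSum (fun q : ι × ι => u q.1 * v q.2 + u q.2 * v q.1)
      (2 * ((∑' i, u i) * ∑' i, v i)) := by
  have hmul : HasSum (fun q : ι × ι => u q.1 * v q.2) ((∑' i, u i) * ∑' i, v i) :=
    hu.hasSum.mul hv.hasSum (summable_mul_of_summable_norm hu.norm hv.norm)
  rw [two_mul]
  exact hmul.add ((Equiv.prodComm ι ι).hasSum_iff.mpr hmul)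

theorem hasSum_cross_mul_sub (hu : Summable u) (hv : Summable v)
    (huw : Summable fun i => u i * w i) (hvw : Summable fun i => v i * w i) :
    HasSum (fun q : ι × ι => (u q.1 * v q.2 - u q.2 * v q.1) * (w q.1 - w q.2))
      (2 * ((∑' i, u i * w i) * (∑' i, v i) - (∑' i, v i * w i) * ∑' i, u i)) := by
  rw [mul_sub]
  refine ((hasSum_mul_add_mul_swap huw hv).sub (hasSum_mul_add_mul_swap hvw hu)).congr_fun ?_
  intro q
  ring

variable [LinearOrder ι]

theorem cross_mul_sub_nonpos (huv : ∀ i j, i ≤ j → u i * v j ≤ u j * v i) (hw : Antitone w)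
    (i j : ι) : (u i * v j - u j * v i) * (w i - w j) ≤ 0 := by
  rcases le_total i j with hij | hji
  · exact mul_nonpos_of_nonpos_of_nonneg (sub_nonpos.2 (huv i j hij)) (sub_nonneg.2 (hw hij))
  · exact mul_nonpos_of_nonneg_of_nonpos (sub_nonneg.2 (huv j i hji)) (sub_nonpos.2 (hw hji))

theorem weightedMean_le_weightedMean (hu : Summable u) (hv : Summable v)
    (huw : Summable fun i => u i * w i) (hvw : Summable fun i => v i * w i)
    (hu_pos : 0 < ∑' i, u i) (hv_pos : 0 < ∑' i, v i)
    (huv : ∀ i j, i ≤ j → u i * v j ≤ u j * v i) (hw : Antitone w) :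
    weightedMean u w ≤ weightedMean v w := by
  have hcross := hasSum_le (fun q : ι × ι => cross_mul_sub_nonpos huv hw q.1 q.2)
    (hasSum_cross_mul_sub hu hv huw hvw) hasSum_zero
  rw [weightedMean, weightedMean, div_le_div_iff₀ hu_pos hv_pos]
  linarith

theorem weightedMean_lt_weightedMean (hu : Summable u) (hv : Summable v)
    (huw : Summable fun i => u i * w i) (hvw : Summable fun i => v i * w i)
    (hu_pos : 0 < ∑' i, u i) (hv_pos : 0 < ∑' i, v i)
    (huv : ∀ i j, i ≤ j → u i * v j ≤ u j * v i) (hw : Antitone w)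
    {i j : ι} (huv_lt : u i * v j < u j * v i) (hw_lt : w j < w i) :
    weightedMean u w < weightedMean v w := by
  have hcross := hasSum_lt (i := (i, j)) (fun q => cross_mul_sub_nonpos huv hw q.1 q.2)
    (mul_neg_of_neg_of_pos (sub_neg.2 huv_lt) (sub_pos.2 hw_lt))
    (hasSum_cross_mul_sub hu hv huw hvw) hasSum_zero
  rw [weightedMean, weightedMean, div_lt_div_iff₀ hu_pos hv_pos]
  linarith

end WeightedMean

section PowerSeries

variable {a w : ℕ → ℝ} {x y : ℝ}

theorem pow_mul_pow_le_pow_mul_pow (hy : 0 ≤ y) (hyx : y ≤ x) {i j : ℕ} (hij : i ≤ j) :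
    x ^ i * y ^ j ≤ x ^ j * y ^ i := by
  obtain ⟨d, rfl⟩ := Nat.exists_eq_add_of_le hij
  have hx : 0 ≤ x := hy.trans hyx
  calc x ^ i * y ^ (i + d) = x ^ i * y ^ i * y ^ d := by ring
    _ ≤ x ^ i * y ^ i * x ^ d := by gcongr
    _ = x ^ (i + d) * y ^ i := by ring

theorem mul_pow_cross_mul_le (ha : ∀ j, 0 ≤ a j) (hy : 0 ≤ y) (hyx : y ≤ x)
    (i j : ℕ) (hij : i ≤ j) :
    a i * x ^ i * (a j * y ^ j) ≤ a j * x ^ j * (a i * y ^ i) := by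
  have := mul_le_mul_of_nonneg_left (pow_mul_pow_le_pow_mul_pow hy hyx hij)
    (mul_nonneg (ha i) (ha j))
  linarith

theorem tsum_mul_pow_pos (ha : ∀ j, 0 ≤ a j) (ha0 : 0 < a 0) (hx : 0 ≤ x)
    (hsum : Summable fun j => a j * x ^ j) : 0 < ∑' j, a j * x ^ j :=
  hsum.tsum_pos (fun j => mul_nonneg (ha j) (pow_nonneg hx j)) 0 (by simpa using ha0)

theorem summable_mul_of_antitone_of_nonneg {f : ℕ → ℝ} (hf : Summable f) (hw : Antitone w)
    (hw0 : ∀ j, 0 ≤ w j) : Summable fun j => f j * w j := by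
  refine .of_norm_bounded (hf.norm.mul_right (w 0)) fun j => ?_
  rw [norm_mul, Real.norm_of_nonneg (hw0 j)]
  gcongr
  exact hw j.zero_le

theorem antitoneOn_weightedMean_mul_pow (ha : ∀ j, 0 ≤ a j) (ha0 : 0 < a 0)
    (hw : Antitone w) (hw0 : ∀ j, 0 ≤ w j) :
    AntitoneOn (fun x : ℝ => weightedMean (fun j => a j * x ^ j) w)
      {x | 0 ≤ x ∧ Summable fun j => a j * x ^ j} := by
  rintro y ⟨hy, hsy⟩ x ⟨hx, hsx⟩ hyx
  exact weightedMean_le_weightedMean hsx hsy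
    (summable_mul_of_antitone_of_nonneg hsx hw hw0) (summable_mul_of_antitone_of_nonneg hsy hw hw0)
    (tsum_mul_pow_pos ha ha0 hx hsx) (tsum_mul_pow_pos ha ha0 hy hsy)
    (mul_pow_cross_mul_le ha hy hyx) hw

theorem strictAntiOn_weightedMean_mul_pow (ha : ∀ j, 0 ≤ a j) (ha0 : 0 < a 0)
    (hw : Antitone w) (hw0 : ∀ j, 0 ≤ w j) {m : ℕ} (ham : 0 < a m) (hwm : w m < w 0) :
    StrictAntiOn (fun x : ℝ => weightedMean (fun j => a j * x ^ j) w)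
      {x | 0 ≤ x ∧ Summable fun j => a j * x ^ j} := by
  rintro y ⟨hy, hsy⟩ x ⟨hx, hsx⟩ hyx
  have hm : m ≠ 0 := by
    rintro rfl
    exact hwm.false
  -- Comparing `m` with index `0` keeps this strict even when `y = 0`.
  have hratio : a 0 * x ^ 0 * (a m * y ^ m) < a m * x ^ m * (a 0 * y ^ 0) := by
    have := mul_lt_mul_of_pos_left (pow_lt_pow_left₀ hyx hy hm) (mul_pos ha0 ham)
    linarith
  exact weightedMean_lt_weightedMean hsx hsy
    (summable_mul_of_antitone_of_nonneg hsx hw hw0) (summable_mul_of_antitone_of_nonneg hsy hw hw0)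
    (tsum_mul_pow_pos ha ha0 hx hsx) (tsum_mul_pow_pos ha ha0 hy hsy)
    (mul_pow_cross_mul_le ha hy hyx.le) hw hratio hwm

end PowerSeries

section NoSuccess

variable {pi p : ℕ → ℝ} {k : ℕ}

theorem s0_zero (p : ℕ → ℝ) (k : ℕ) : s0 p k 0 = 1 := by
  simp [s0]

theorem s0_succ (p : ℕ → ℝ) (k j : ℕ) : s0 p k (j + 1) = s0 p k j * (1 - p (k + j + 1)) :=
  Finset.prod_Ico_succ_top (by lia) _

theorem s0_nonneg (hp : ∀ i, k + 1 ≤ i → p i ≤ 1) (j : ℕ) : 0 ≤ s0 p k j :=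
  Finset.prod_nonneg fun i hi => sub_nonneg.2 (hp i (Finset.mem_Ico.1 hi).1)

theorem s0_antitone (hp : ∀ i, k + 1 ≤ i → 0 ≤ p i ∧ p i ≤ 1) : Antitone (s0 p k) := by
  refine antitone_nat_of_succ_le fun j => ?_
  rw [s0_succ]
  exact mul_le_of_le_one_right (s0_nonneg (fun i hi => (hp i hi).2) j)
    (sub_le_self 1 (hp (k + j + 1) (by lia)).1)

theorem s0_succ_lt_one (hp : ∀ i, k + 1 ≤ i → 0 < p i ∧ p i ≤ 1) (j : ℕ) :
    s0 p k (j + 1) < 1 :=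
  calc s0 p k (j + 1) ≤ s0 p k 1 :=
        s0_antitone (fun i hi => ⟨(hp i hi).1.le, (hp i hi).2⟩) (by lia)
    _ = 1 - p (k + 1) := by rw [s0_succ, s0_zero, one_mul, add_zero]
    _ < 1 := sub_lt_self 1 (hp (k + 1) le_rfl).1

theorem exists_pos_and_s0_lt_one (hp : ∀ i, k + 1 ≤ i → 0 < p i ∧ p i ≤ 1)
    (htail : 0 < ∑' j, pi (k + 1 + j)) : ∃ j, 0 < pi (k + j) ∧ s0 p k j < 1 := by
  obtain ⟨j, hj⟩ : ∃ j, 0 < pi (k + 1 + j) := by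
    by_contra! hnonpos
    exact htail.not_ge (tsum_nonpos hnonpos)
  exact ⟨j + 1, by rwa [add_right_comm] at hj, s0_succ_lt_one hp j⟩

theorem S0_eq_weightedMean (pi p : ℕ → ℝ) (k : ℕ) :
    S0 pi p k = fun t =>
      weightedMean (fun j => pi (k + j) * ((k + j).choose k : ℝ) * (1 - t) ^ j) (s0 p k) :=
  rfl

theorem summable_mul_choose_mul_pow {C x : ℝ} (hpi0 : ∀ n, 0 ≤ pi n) (hpiC : ∀ n, pi n ≤ C)
    (hx : x ∈ Set.Ico (0 : ℝ) 1) :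
    Summable fun j => pi (k + j) * ((k + j).choose k : ℝ) * x ^ j := by
  have hchoose : Summable fun j => ((k + j).choose k : ℝ) * x ^ j := by
    simpa only [add_comm] using summable_choose_mul_geometric_of_norm_lt_one k
      ((Real.norm_of_nonneg hx.1).trans_lt hx.2)
  refine .of_nonneg_of_le (fun j => ?_) (fun j => ?_) (hchoose.mul_left C)
  · exact mul_nonneg (mul_nonneg (hpi0 _) (Nat.cast_nonneg _)) (pow_nonneg hx.1 j)
  · rw [mul_assoc]
    exact mul_le_mul_of_nonneg_right (hpiC _)
      (mul_nonneg (Nat.cast_nonneg _) (pow_nonneg hx.1 j))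

theorem stmt3_general (hpi0 : ∀ n, k ≤ n → 0 ≤ pi n) (hpik : 0 < pi k)
    (hsum : ∀ x ∈ Set.Ico (0 : ℝ) 1,
      Summable fun j => pi (k + j) * ((k + j).choose k : ℝ) * x ^ j)
    (hp : ∀ i, k + 1 ≤ i → 0 ≤ p i ∧ p i ≤ 1) :
    MonotoneOn (S0 pi p k) (Set.Ioc 0 1) ∧
      ((∃ j, 0 < pi (k + j) ∧ s0 p k j < 1) → StrictMonoOn (S0 pi p k) (Set.Ioc 0 1)) := by
  have ha (j : ℕ) : 0 ≤ pi (k + j) * ((k + j).choose k : ℝ) :=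
    mul_nonneg (hpi0 _ (by lia)) (Nat.cast_nonneg _)
  have ha0 : 0 < pi (k + 0) * ((k + 0).choose k : ℝ) := by simpa using hpik
  have hw := s0_antitone hp
  have hw0 := s0_nonneg fun i hi => (hp i hi).2
  have hdomain (t : ℝ) (ht : t ∈ Set.Ioc (0 : ℝ) 1) : 0 ≤ 1 - t ∧
      Summable fun j => pi (k + j) * ((k + j).choose k : ℝ) * (1 - t) ^ j :=
    ⟨sub_nonneg.2 ht.2, hsum _ ⟨sub_nonneg.2 ht.2, sub_lt_self 1 ht.1⟩⟩
  rw [S0_eq_weightedMean]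
  refine ⟨fun t ht t' ht' htt' => ?_, fun ⟨m, hpim, hsm⟩ t ht t' ht' htt' => ?_⟩
  · exact antitoneOn_weightedMean_mul_pow ha ha0 hw hw0 (hdomain t' ht') (hdomain t ht)
      (sub_le_sub_left htt' 1)
  · have ham : 0 < pi (k + m) * ((k + m).choose k : ℝ) :=
      mul_pos hpim (Nat.cast_pos.2 (Nat.choose_pos (by lia)))
    exact strictAntiOn_weightedMean_mul_pow ha ha0 hw hw0 ham (hsm.trans_eq (s0_zero p k).symm)
      (hdomain t' ht') (hdomain t ht) (sub_lt_sub_left htt' 1)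

end NoSuccess

/-- `t ↦ S₀(t,k)` is nondecreasing on `(0,1]`, and strictly increasing there
if `∑_{j=k+1}^∞ π_j > 0`. -/
theorem stmt3 (k : ℕ) (hk : 1 ≤ k) (pi : ℕ → ℝ)
    (hpi0 : ∀ n, 0 ≤ pi n) (hpi1 : HasSum pi 1) (hpik : 0 < pi k)
    (p : ℕ → ℝ) (hp : ∀ i : ℕ, k + 1 ≤ i → 0 < p i ∧ p i < 1) :
    MonotoneOn (S0 pi p k) (Set.Ioc 0 1) ∧
      ((0 < ∑' j : ℕ, pi (k + 1 + j)) →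
        StrictMonoOn (S0 pi p k) (Set.Ioc 0 1)) := by
  exact (stmt3_general (fun n _ => hpi0 n) hpik
    (fun _ => summable_mul_choose_mul_pow hpi0 fun n => le_hasSum hpi1 n fun j _ => hpi0 j)
    (fun i hi => ⟨(hp i hi).1.le, (hp i hi).2.le⟩)).imp_right fun hstrict htail =>
      hstrict (exists_pos_and_s0_lt_one (fun i hi => ⟨(hp i hi).1, (hp i hi).2.le⟩) htail)
end

section
/- Let θ > 0, ν > 0 and x ∈ (0,1). If ν > θ, then the sequence k ↦ (1−x)^θ F(θ, θ−ν, k+θ, x) is strictly increasing in the integer k ≥ 1; if ν < θ, it is strictly decreasing in k. -/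
/-- The rising factorial (Pochhammer symbol): `(y)_j = y(y+1)⋯(y+j-1)`, `(y)_0 = 1`. -/
noncomputable def risingFactorial (y : ℝ) : ℕ → ℝ
  | 0 => 1
  | m + 1 => risingFactorial y m * (y + m)

/-- The Gaussian hypergeometric function
`F(a,b,c,x) = ∑_{j≥0} (a)_j (b)_j / ((c)_j j!) xʲ`. -/
noncomputable def hypF (a b c x : ℝ) : ℝ :=
  ∑' j : ℕ, risingFactorial a j * risingFactorial b j /
    (risingFactorial c j * (Nat.factorial j : ℝ)) * x ^ j

/-!
Raising the third parameter by one changes the hypergeometric function by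
`₂F₁ a b (c + 1) x - ₂F₁ a b c x = -(a b x / (c (c + 1))) ₂F₁ (a + 1) (b + 1) (c + 2) x`,
so the sign of the increment is opposite to that of `b` once the last factor is known to be
positive. In general `₂F₁ a b c x > 0` whenever `0 < a < c` and `0 ≤ x < 1`: this is clear from
the series for `b > 0`, and a contiguous relation with positive coefficients carries positivity
from `b + 1` down to `b`.
-/

open scoped Nat

section Pochhammer

variable {R : Type*}

lemma add_one_add_natCast_ne_zero [AddMonoidWithOne R] {c : R} (hc : ∀ n : ℕ, c + n ≠ 0) (n : ℕ) :
    c + 1 + n ≠ 0 := by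
  simpa [add_assoc] using hc (1 + n)

lemma ascPochhammer_succ_eval_left [CommSemiring R] (n : ℕ) (a : R) :
    (ascPochhammer R (n + 1)).eval a = a * (ascPochhammer R n).eval (a + 1) := by
  simp [ascPochhammer_succ_left]

lemma ascPochhammer_eval_ne_zero [CommRing R] [IsDomain R] {c : R} (hc : ∀ n : ℕ, c + n ≠ 0)
    (n : ℕ) : (ascPochhammer R n).eval c ≠ 0 := by
  rw [Ne, ascPochhammer_eval_eq_zero_iff]
  rintro ⟨k, -, hk⟩
  exact hc k (by rw [hk, add_neg_cancel])

end Pochhammer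

section Coefficients

variable {𝕂 : Type*} [Field 𝕂] [CharZero 𝕂] {c : 𝕂}

lemma ordinaryHypergeometricCoefficient_contiguous (a b : 𝕂) (hc : ∀ n : ℕ, c + n ≠ 0) (n : ℕ) :
    c * ordinaryHypergeometricCoefficient a b c (n + 1) =
      (c - a) * ordinaryHypergeometricCoefficient a (b + 1) (c + 1) (n + 1) +
        a * (ordinaryHypergeometricCoefficient (a + 1) (b + 1) (c + 1) (n + 1) -
          ordinaryHypergeometricCoefficient (a + 1) (b + 1) (c + 1) n) := by
  have hc0 : c ≠ 0 := by simpa using hc 0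
  have hcn := add_one_add_natCast_ne_zero hc
  have hpoch := ascPochhammer_eval_ne_zero hcn n
  have hn := hcn n
  have hn1 : (n : 𝕂) + 1 ≠ 0 := Nat.cast_add_one_ne_zero n
  have hfact : (n ! : 𝕂) ≠ 0 := Nat.cast_ne_zero.2 n.factorial_ne_zero
  simp only [ordinaryHypergeometricCoefficient, ascPochhammer_succ_eval_left n a,
    ascPochhammer_succ_eval_left n b, ascPochhammer_succ_eval_left n c,
    ascPochhammer_succ_eval n (a + 1), ascPochhammer_succ_eval n (b + 1),
    ascPochhammer_succ_eval n (c + 1), Nat.factorial_succ, Nat.cast_mul, Nat.cast_succ]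
  field_simp
  ring

lemma ordinaryHypergeometricCoefficient_add_one_sub (a b : 𝕂) (hc : ∀ n : ℕ, c + n ≠ 0) (n : ℕ) :
    ordinaryHypergeometricCoefficient a b (c + 1) (n + 1) -
        ordinaryHypergeometricCoefficient a b c (n + 1) =
      -(a * b / (c * (c + 1))) * ordinaryHypergeometricCoefficient (a + 1) (b + 1) (c + 2) n := by
  have hc0 : c ≠ 0 := by simpa using hc 0
  have hcn := add_one_add_natCast_ne_zero hc
  have hc1 : c + 1 ≠ 0 := by simpa using hcn 0
  have hpoch := ascPochhammer_eval_ne_zero hcn n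
  have hn := hcn n
  have hn1 : (n : 𝕂) + 1 ≠ 0 := Nat.cast_add_one_ne_zero n
  have hfact : (n ! : 𝕂) ≠ 0 := Nat.cast_ne_zero.2 n.factorial_ne_zero
  have hshift : (ascPochhammer 𝕂 n).eval (c + 2) =
      (ascPochhammer 𝕂 n).eval (c + 1) * (c + 1 + n) / (c + 1) := by
    rw [eq_div_iff hc1, ← ascPochhammer_succ_eval, ascPochhammer_succ_eval_left, mul_comm,
      add_assoc, one_add_one_eq_two]
  simp only [ordinaryHypergeometricCoefficient, ascPochhammer_succ_eval_left n a,
    ascPochhammer_succ_eval_left n b, ascPochhammer_succ_eval_left n c,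
    ascPochhammer_succ_eval n (c + 1), hshift, Nat.factorial_succ, Nat.cast_mul, Nat.cast_succ]
  field_simp
  ring

end Coefficients

section Series

variable {𝕂 : Type*} [RCLike 𝕂] {c x : 𝕂}

lemma one_le_radius_ordinaryHypergeometricSeries (a b c : 𝕂) :
    1 ≤ (ordinaryHypergeometricSeries 𝕂 a b c).radius := by
  by_cases hint : ∃ k : ℕ, (k : 𝕂) = -a ∨ (k : 𝕂) = -b ∨ (k : 𝕂) = -c
  · obtain ⟨k, hk⟩ := hint
    refine le_top.trans_eq (FormalMultilinearSeries.radius_eq_top_of_forall_image_add_eq_zero _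
      (k + 1) fun n ↦ ?_).symm
    exact ordinaryHypergeometricSeries_eq_zero_of_neg_nat a b c hk (by lia)
  · push Not at hint
    exact (ordinaryHypergeometricSeries_radius_eq_one 𝕂 a b c hint).ge

lemma hasSum_ordinaryHypergeometric (a b c : 𝕂) (hx : ‖x‖ < 1) :
    HasSum (fun n ↦ ordinaryHypergeometricCoefficient a b c n * x ^ n) (₂F₁ a b c x) := by
  have hmem : x ∈ Metric.eball 0 (ordinaryHypergeometricSeries 𝕂 a b c).radius := by
    refine Metric.eball_subset_eball (one_le_radius_ordinaryHypergeometricSeries a b c) ?_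
    rw [mem_eball_zero_iff, ← ofReal_norm, ← ENNReal.ofReal_one]
    exact (ENNReal.ofReal_lt_ofReal_iff one_pos).2 hx
  refine ((ordinaryHypergeometricSeries 𝕂 a b c).hasSum hmem).congr_fun fun n ↦ ?_
  rw [ordinaryHypergeometricSeries_apply_eq, smul_eq_mul]

lemma hasSum_ordinaryHypergeometric_sub_one (a b c : 𝕂) (hx : ‖x‖ < 1) :
    HasSum (fun n ↦ ordinaryHypergeometricCoefficient a b c (n + 1) * x ^ (n + 1))
      (₂F₁ a b c x - 1) := by
  simpa [ordinaryHypergeometricCoefficient] using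
    (hasSum_nat_add_iff' 1).2 (hasSum_ordinaryHypergeometric a b c hx)

/-- Under Euler's integral representation, with weight `t ^ (a - 1) (1 - t) ^ (c - a - 1)`, this is
the splitting `1 - x t = (1 - t) + (1 - x) t` of one factor of `(1 - x t) ^ (-b)`. -/
theorem ordinaryHypergeometric_contiguous (a b : 𝕂) (hc : ∀ n : ℕ, c + n ≠ 0) (hx : ‖x‖ < 1) :
    c * ₂F₁ a b c x =
      (c - a) * ₂F₁ a (b + 1) (c + 1) x + (1 - x) * a * ₂F₁ (a + 1) (b + 1) (c + 1) x := by
  have hlhs := (hasSum_ordinaryHypergeometric_sub_one a b c hx).mul_left c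
  have hrhs := ((hasSum_ordinaryHypergeometric_sub_one a (b + 1) (c + 1) hx).mul_left (c - a)).add
    (((hasSum_ordinaryHypergeometric_sub_one (a + 1) (b + 1) (c + 1) hx).sub
      ((hasSum_ordinaryHypergeometric (a + 1) (b + 1) (c + 1) hx).mul_left x)).mul_left a)
  have hsums := hlhs.unique <| hrhs.congr_fun fun n ↦ by
    linear_combination x ^ (n + 1) * ordinaryHypergeometricCoefficient_contiguous a b hc n
  linear_combination hsums

theorem ordinaryHypergeometric_add_one_sub (a b : 𝕂) (hc : ∀ n : ℕ, c + n ≠ 0) (hx : ‖x‖ < 1) :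
    ₂F₁ a b (c + 1) x - ₂F₁ a b c x =
      -(a * b * x / (c * (c + 1))) * ₂F₁ (a + 1) (b + 1) (c + 2) x := by
  have hlhs := (hasSum_ordinaryHypergeometric_sub_one a b (c + 1) hx).sub
    (hasSum_ordinaryHypergeometric_sub_one a b c hx)
  have hrhs := (hasSum_ordinaryHypergeometric (a + 1) (b + 1) (c + 2) hx).mul_left
    (-(a * b * x / (c * (c + 1))))
  have hsums := hlhs.unique <| hrhs.congr_fun fun n ↦ by
    linear_combination x ^ (n + 1) * ordinaryHypergeometricCoefficient_add_one_sub a b hc n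
  linear_combination hsums

end Series

section Real

variable {a b c x : ℝ}

lemma one_le_ordinaryHypergeometric (ha : 0 < a) (hb : 0 < b) (hc : 0 < c)
    (hx : x ∈ Set.Ico (0 : ℝ) 1) : 1 ≤ ₂F₁ a b c x := by
  have hterm (n : ℕ) : 0 ≤ ordinaryHypergeometricCoefficient a b c n * x ^ n := by
    have hxn := pow_nonneg hx.1 n
    have han := ascPochhammer_pos n a ha
    have hbn := ascPochhammer_pos n b hb
    have hcn := ascPochhammer_pos n c hc
    positivity
  have hsum := hasSum_ordinaryHypergeometric a b c ((Real.norm_of_nonneg hx.1).trans_lt hx.2)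
  simpa [ordinaryHypergeometricCoefficient] using le_hasSum hsum 0 fun n _ ↦ hterm n

theorem ordinaryHypergeometric_pos (ha : 0 < a) (hac : a < c) (hx : x ∈ Set.Ico (0 : ℝ) 1) :
    0 < ₂F₁ a b c x := by
  obtain ⟨n, hn⟩ := exists_nat_gt (-b)
  induction n generalizing a b c with
  | zero =>
    have hb : 0 < b := by simpa using hn
    exact one_pos.trans_le (one_le_ordinaryHypergeometric ha hb (ha.trans hac) hx)
  | succ n ih =>
    have hc : 0 < c := ha.trans hac
    have hbn : -(b + 1) < n := by
      push_cast at hn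
      linarith
    have hpos₁ : 0 < ₂F₁ a (b + 1) (c + 1) x := ih ha (by linarith) hbn
    have hpos₂ : 0 < ₂F₁ (a + 1) (b + 1) (c + 1) x := ih (by linarith) (by linarith) hbn
    have hmul : 0 < c * ₂F₁ a b c x := by
      rw [ordinaryHypergeometric_contiguous a b (fun k ↦ by positivity)
        ((Real.norm_of_nonneg hx.1).trans_lt hx.2)]
      exact add_pos (mul_pos (sub_pos.2 hac) hpos₁)
        (mul_pos (mul_pos (sub_pos.2 hx.2) ha) hpos₂)
    exact pos_of_mul_pos_right hmul hc.le

lemma sign_ordinaryHypergeometric_add_one_sub (ha : 0 < a) (hc : 0 < c) (hac : a < c + 1)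
    (hx : x ∈ Set.Ioo (0 : ℝ) 1) :
    SignType.sign (₂F₁ a b (c + 1) x - ₂F₁ a b c x) = SignType.sign (-b) := by
  have hx0 := hx.1
  have hF : 0 < ₂F₁ (a + 1) (b + 1) (c + 2) x :=
    ordinaryHypergeometric_pos (by linarith) (by linarith) (Set.Ioo_subset_Ico_self hx)
  have hfactor : 0 < a * x / (c * (c + 1)) * ₂F₁ (a + 1) (b + 1) (c + 2) x := by positivity
  calc SignType.sign (₂F₁ a b (c + 1) x - ₂F₁ a b c x)
    _ = SignType.sign (-b * (a * x / (c * (c + 1)) * ₂F₁ (a + 1) (b + 1) (c + 2) x)) := by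
        rw [ordinaryHypergeometric_add_one_sub a b (fun k ↦ by positivity)
          ((Real.norm_of_nonneg hx0.le).trans_lt hx.2)]
        ring_nf
    _ = SignType.sign (-b) := by rw [sign_mul, sign_pos hfactor, mul_one]

lemma sign_ordinaryHypergeometric_natCast_succ_sub (ha : 0 < a) (hc : 0 < c) (hac : a < c + 1)
    (hx : x ∈ Set.Ioo (0 : ℝ) 1) (k : ℕ) :
    SignType.sign (₂F₁ a b ((k + 1 : ℕ) + c) x - ₂F₁ a b (k + c) x) = SignType.sign (-b) := by
  rw [Nat.cast_succ, add_right_comm]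
  exact sign_ordinaryHypergeometric_add_one_sub ha (by positivity)
    (by linarith [k.cast_nonneg (α := ℝ)]) hx

theorem strictMono_ordinaryHypergeometric_natCast_add (ha : 0 < a) (hb : b < 0) (hc : 0 < c)
    (hac : a < c + 1) (hx : x ∈ Set.Ioo (0 : ℝ) 1) :
    StrictMono fun k : ℕ ↦ ₂F₁ a b (k + c) x := by
  refine strictMono_nat_of_lt_succ fun k ↦ sub_pos.1 (sign_eq_one_iff.1 ?_)
  rw [sign_ordinaryHypergeometric_natCast_succ_sub ha hc hac hx, sign_pos (neg_pos.2 hb)]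

theorem strictAnti_ordinaryHypergeometric_natCast_add (ha : 0 < a) (hb : 0 < b) (hc : 0 < c)
    (hac : a < c + 1) (hx : x ∈ Set.Ioo (0 : ℝ) 1) :
    StrictAnti fun k : ℕ ↦ ₂F₁ a b (k + c) x := by
  refine strictAnti_nat_of_succ_lt fun k ↦ sub_neg.1 (sign_eq_neg_one_iff.1 ?_)
  rw [sign_ordinaryHypergeometric_natCast_succ_sub ha hc hac hx, sign_neg (neg_lt_zero.2 hb)]

end Real

lemma risingFactorial_eq_ascPochhammer_eval (y : ℝ) (n : ℕ) :
    risingFactorial y n = (ascPochhammer ℝ n).eval y := by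
  induction n with
  | zero => simp [risingFactorial]
  | succ n ih => rw [risingFactorial, ih, ascPochhammer_succ_eval]

lemma hypF_eq_ordinaryHypergeometric (a b c x : ℝ) : hypF a b c x = ₂F₁ a b c x := by
  rw [hypF, ordinaryHypergeometric_eq_tsum]
  refine tsum_congr fun n ↦ ?_
  simp only [risingFactorial_eq_ascPochhammer_eval, smul_eq_mul]
  ring

theorem stmt7_general (a b c x : ℝ) (ha : 0 < a) (hc : 0 < c) (hac : a < c + 1)
    (hx : x ∈ Set.Ioo (0 : ℝ) 1) :
    (b < 0 → StrictMono fun k : ℕ ↦ (1 - x) ^ a * hypF a b (k + c) x) ∧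
      (0 < b → StrictAnti fun k : ℕ ↦ (1 - x) ^ a * hypF a b (k + c) x) := by
  have hpow : 0 < (1 - x) ^ a := Real.rpow_pos_of_pos (sub_pos.2 hx.2) a
  simp only [hypF_eq_ordinaryHypergeometric]
  exact ⟨fun hb ↦ (strictMono_ordinaryHypergeometric_natCast_add ha hb hc hac hx).const_mul hpow,
    fun hb ↦ (strictAnti_ordinaryHypergeometric_natCast_add ha hb hc hac hx).const_mul hpow⟩

/-- `W₀(x,k) = (1-x)^θ F(θ, θ-ν, k+θ, x)` is strictly increasing in the integer
`k ≥ 1` when `ν > θ`, and strictly decreasing in `k` when `ν < θ`. -/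
theorem stmt7 (θ ν x : ℝ) (hθ : 0 < θ) (hν : 0 < ν) (hx : x ∈ Set.Ioo (0 : ℝ) 1) :
    (ν > θ → ∀ k l : ℕ, 1 ≤ k → k < l →
      (1 - x) ^ θ * hypF θ (θ - ν) ((k : ℝ) + θ) x <
        (1 - x) ^ θ * hypF θ (θ - ν) ((l : ℝ) + θ) x) ∧
    (ν < θ → ∀ k l : ℕ, 1 ≤ k → k < l →
      (1 - x) ^ θ * hypF θ (θ - ν) ((l : ℝ) + θ) x <
        (1 - x) ^ θ * hypF θ (θ - ν) ((k : ℝ) + θ) x) := by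
  have ⟨hmono, hanti⟩ := stmt7_general θ (θ - ν) θ x hθ hθ (lt_add_one θ) hx
  exact ⟨fun hlt _ _ _ hkl ↦ hmono (sub_neg.2 hlt) hkl,
    fun hlt _ _ _ hkl ↦ hanti (sub_pos.2 hlt) hkl⟩
end

section
/- Let θ > 0 and ν > 0, and set α* = 1 − e^{−1/θ}. For each integer k ≥ 1 the equation D_a log F(θ, θ−ν, θ+k, x) = −1/θ − log(1−x), where D_a log F denotes the derivative at a = θ of the function a ↦ log F(a, θ−ν, θ+k, x), has a unique root α_k in (0,1). Moreover: if ν > θ then the sequence (α_k) is strictly increasing and converges to α*; if ν < θ then (α_k) is strictly decreasing and converges to α*; and if ν = θ then α_k = α* for all k. -/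
open Filter

/-- `D_a log F(θ, θ-ν, θ+k, x)`: the derivative at `a = θ` of
`a ↦ log F(a, θ-ν, θ+k, x)`. -/
noncomputable def DalogF (θ ν : ℝ) (k : ℕ) (x : ℝ) : ℝ :=
  deriv (fun a : ℝ => Real.log (hypF a (θ - ν) (θ + (k : ℝ)) x)) θ

/-!
Write `L_k(x)` for the logarithmic derivative of `a ↦ F(a, ν + k, θ + k, x)` at `a = k`. Euler's
transformation `F(a, b, c, x) = (1 - x)^(c - a - b) F(c - a, c - b, c, x)` turns the equation for
`α_k` into `L_k(x) = 1 / θ`.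

The numerator of `L_k(x) - t` is a power series whose coefficients change sign once, from negative
to positive, so `L_k` is strictly increasing on `(0, 1)`. A summation by parts shows that the
partial sums of these coefficients for `t = 1 / θ` are not all nonpositive at large order, so `L_k`
exceeds `1 / θ` near `x = 1`.

The cross-multiplied difference `L_k - L_{k+1}` solves a first-order linear differential equation
whose recurrence for the coefficients has nonnegative multipliers and a source of the sign of
`ν - θ`; hence `L_k - L_{k+1}` has that sign, which orders the roots. Finally
`L_k(x) → -log (1 - x)` as `k → ∞`, with equality for `ν = θ`, and `-log (1 - x) = 1 / θ` has the
root `α* = 1 - e^{-1/θ}`.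
-/

section SignChange

open Finset Topology

variable {u v ρ : ℕ → ℝ} {J N : ℕ} {x y : ℝ}

lemma mul_le_mul_of_sign_change (hρ : Monotone ρ) (hneg : ∀ n < J, u n ≤ 0)
    (hpos : ∀ n ≥ J, 0 ≤ u n) (n : ℕ) : ρ J * u n ≤ ρ n * u n := by
  rcases lt_or_ge n J with hn | hn
  · exact mul_le_mul_of_nonpos_right (hρ hn.le) (hneg n hn)
  · exact mul_le_mul_of_nonneg_right (hρ hn) (hpos n hn)

lemma tsum_mul_pow_pos_of_sign_change (hneg : ∀ n < J, u n ≤ 0) (hpos : ∀ n ≥ J, 0 ≤ u n)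
    (h0 : u 0 < 0) (hx : 0 < x) (hxy : x < y) (hux : Summable fun n ↦ u n * x ^ n)
    (huy : Summable fun n ↦ u n * y ^ n) (h : 0 ≤ ∑' n, u n * x ^ n) :
    0 < ∑' n, u n * y ^ n := by
  have hJ : J ≠ 0 := fun hJ ↦ h0.not_ge (hpos 0 hJ.le)
  have hr : 1 < y / x := (one_lt_div hx).2 hxy
  have hscale (n : ℕ) : (y / x) ^ n * (u n * x ^ n) = u n * y ^ n := by
    rw [div_pow]
    field_simp
  have hle (n : ℕ) : (y / x) ^ J * (u n * x ^ n) ≤ u n * y ^ n := by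
    rw [← hscale]
    exact mul_le_mul_of_sign_change (pow_right_mono₀ hr.le)
      (fun n hn ↦ mul_nonpos_of_nonpos_of_nonneg (hneg n hn) (by positivity))
      (fun n hn ↦ mul_nonneg (hpos n hn) (by positivity)) n
  have hlt : (y / x) ^ J * (u 0 * x ^ 0) < u 0 * y ^ 0 := by
    simpa using mul_lt_mul_of_neg_right (one_lt_pow₀ hr hJ) h0
  calc 0 ≤ (y / x) ^ J * ∑' n, u n * x ^ n := by positivity
    _ = ∑' n, (y / x) ^ J * (u n * x ^ n) := tsum_mul_left.symm
    _ < ∑' n, u n * y ^ n := (hux.mul_left _).tsum_lt_tsum hle hlt huy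

lemma exists_tsum_mul_pow_pos (hpos : ∀ n ≥ N, 0 ≤ u n) (hsum : 0 < ∑ n ∈ range N, u n)
    (hu : ∀ x ∈ Set.Ioo (0 : ℝ) 1, Summable fun n ↦ u n * x ^ n) :
    ∃ x ∈ Set.Ioo (0 : ℝ) 1, 0 < ∑' n, u n * x ^ n := by
  have hcont : Continuous fun x : ℝ ↦ ∑ n ∈ range N, u n * x ^ n := by fun_prop
  have hnear : ∀ᶠ x in 𝓝[<] (1 : ℝ), 0 < ∑ n ∈ range N, u n * x ^ n :=
    (hcont.tendsto 1).mono_left nhdsWithin_le_nhds |>.eventually_const_lt (by simpa using hsum)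
  obtain ⟨x, hx, hx01⟩ := (hnear.and (Ioo_mem_nhdsLT zero_lt_one)).exists
  refine ⟨x, hx01, hx.trans_le ((hu x hx01).sum_le_tsum _ fun n hn ↦ ?_)⟩
  exact mul_nonneg (hpos n (by simpa using hn)) (pow_nonneg hx01.1.le n)

-- Otherwise `(∑ n < N, v n) / (N + s)` is eventually nondecreasing, against Cesàro.
lemma frequently_add_mul_lt_sum_range (hv : ∀ n, 0 ≤ v n) {m : ℕ} (hm : 0 < v m)
    (hlim : Tendsto v atTop (𝓝 0)) (s : ℝ) :
    ∃ᶠ N : ℕ in atTop, (N + s) * v N < ∑ n ∈ range N, v n := by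
  intro hbound
  obtain ⟨N, hN⟩ := eventually_atTop.1 ((hbound.and (eventually_gt_atTop m)).and
    ((tendsto_atTop_add_const_right _ s tendsto_natCast_atTop_atTop).eventually_gt_atTop (0 : ℝ)))
  have hNs {n : ℕ} (hn : N ≤ n) : 0 < (n : ℝ) + s := (hN n hn).2
  have hsumN : 0 < ∑ n ∈ range N, v n :=
    sum_pos' (fun n _ ↦ hv n) ⟨m, mem_range.2 (hN N le_rfl).1.2, hm⟩
  set δ := (∑ n ∈ range N, v n) / (N + s)
  have hδ : 0 < δ := div_pos hsumN (hNs le_rfl)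
  have hlinear : ∀ n ≥ N, δ * (n + s) ≤ ∑ i ∈ range n, v i := by
    intro n hn
    induction n, hn using Nat.le_induction with
    | base => exact (div_mul_cancel₀ _ (hNs le_rfl).ne').le
    | succ n hn ih =>
      have hδv : δ ≤ v n := le_of_mul_le_mul_right
        (ih.trans ((not_lt.1 (hN n hn).1.1).trans_eq (mul_comm _ _))) (hNs hn)
      rw [sum_range_succ]
      push_cast
      linarith
  have hmean : Tendsto (fun n : ℕ ↦ δ * (1 + s / n)) atTop (𝓝 δ) := by
    simpa using ((tendsto_const_div_atTop_nhds_zero_nat s).const_add 1).const_mul δ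
  refine hδ.not_ge (le_of_tendsto_of_tendsto hmean hlim.cesaro ?_)
  filter_upwards [eventually_ge_atTop N, eventually_gt_atTop 0] with n hn hn0
  calc δ * (1 + s / n) = (n : ℝ)⁻¹ * (δ * (n + s)) := by field_simp
    _ ≤ (n : ℝ)⁻¹ * ∑ i ∈ range n, v i := by gcongr; exact hlinear n hn

end SignChange

section Roots

open Topology

lemma continuousOn_tsum_mul_pow {u : ℕ → ℝ} {y : ℝ} (hu : Summable fun n ↦ u n * y ^ n) :
    ContinuousOn (fun x ↦ ∑' n, u n * x ^ n) (Set.Icc 0 y) := by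
  refine continuousOn_tsum (fun n ↦ by fun_prop) hu.norm fun n x hx ↦ ?_
  rw [norm_mul, norm_mul, norm_pow, norm_pow, Real.norm_of_nonneg hx.1,
    Real.norm_of_nonneg (hx.1.trans hx.2)]
  gcongr
  exacts [hx.1, hx.2]

lemma tendsto_root_of_strictMonoOn {ι : Type*} {l : Filter ι} {f : ι → ℝ → ℝ} {g : ℝ → ℝ}
    {α : ι → ℝ} {β p q t : ℝ} (hf : ∀ᶠ i in l, StrictMonoOn (f i) (Set.Ioo p q))
    (hg : StrictMonoOn g (Set.Ioo p q))
    (hlim : ∀ x ∈ Set.Ioo p q, Tendsto (fun i ↦ f i x) l (𝓝 (g x)))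
    (hα : ∀ᶠ i in l, α i ∈ Set.Ioo p q ∧ f i (α i) = t) (hβ : β ∈ Set.Ioo p q) (hβt : g β = t) :
    Tendsto α l (𝓝 β) := by
  refine tendsto_order.2 ⟨fun a ha ↦ ?_, fun a ha ↦ ?_⟩
  · obtain ⟨x, hx, hxβ⟩ := exists_between (max_lt ha hβ.1)
    have hxI : x ∈ Set.Ioo p q := ⟨(le_max_right _ _).trans_lt hx, hxβ.trans hβ.2⟩
    have hgx : g x < t := (hg hxI hβ hxβ).trans_eq hβt
    filter_upwards [hf, hα, (hlim x hxI).eventually_lt_const hgx] with i hfi hαi hxi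
    have hxα : x < α i := (hfi.lt_iff_lt hxI hαi.1).1 (hxi.trans_eq hαi.2.symm)
    exact (le_max_left _ _).trans_lt (hx.trans hxα)
  · obtain ⟨x, hβx, hx⟩ := exists_between (lt_min ha hβ.2)
    have hxI : x ∈ Set.Ioo p q := ⟨hβ.1.trans hβx, hx.trans_le (min_le_right _ _)⟩
    have hgx : t < g x := hβt.symm.trans_lt (hg hβ hxI hβx)
    filter_upwards [hf, hα, (hlim x hxI).eventually_const_lt hgx] with i hfi hαi hxi
    have hαx : α i < x := (hfi.lt_iff_lt hαi.1 hxI).1 (hαi.2.trans_lt hxi)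
    exact hαx.trans (hx.trans_le (min_le_left _ _))

end Roots

section RisingFactorial

open Finset Topology

variable {a c : ℝ}

lemma risingFactorial_succ (a : ℝ) (n : ℕ) :
    risingFactorial a (n + 1) = risingFactorial a n * (a + n) := rfl

lemma risingFactorial_succ_left (a : ℝ) (n : ℕ) :
    risingFactorial a (n + 1) = a * risingFactorial (a + 1) n := by
  induction n with
  | zero => simp [risingFactorial]
  | succ n ih =>
    rw [risingFactorial_succ, ih, risingFactorial_succ (a + 1)]
    push_cast
    ring

lemma risingFactorial_pos (ha : 0 < a) (n : ℕ) : 0 < risingFactorial a n := by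
  induction n with
  | zero => exact one_pos
  | succ n ih => exact mul_pos ih (by positivity)

lemma abs_risingFactorial_le (h : |a| ≤ c) (n : ℕ) :
    |risingFactorial a n| ≤ risingFactorial c n := by
  induction n with
  | zero => simp [risingFactorial]
  | succ n ih =>
    have hn : |a + n| ≤ c + n := (abs_add_le _ _).trans (by simpa using h)
    rw [risingFactorial_succ, risingFactorial_succ, abs_mul]
    exact mul_le_mul ih hn (abs_nonneg _) ((abs_nonneg _).trans ih)

lemma risingFactorial_eq_eval_ascPochhammer (a : ℝ) (n : ℕ) :
    risingFactorial a n = (ascPochhammer ℝ n).eval a := by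
  induction n with
  | zero => simp [risingFactorial]
  | succ n ih => rw [ascPochhammer_succ_eval, ← ih, risingFactorial_succ]

lemma choose_eq_risingFactorial_div_factorial (a : ℝ) (n : ℕ) :
    Ring.choose (a + n - 1) n = risingFactorial a n / (n.factorial : ℝ) := by
  have h := Ring.factorial_nsmul_multichoose_eq_ascPochhammer a n
  rw [nsmul_eq_mul, Polynomial.ascPochhammer_smeval_eq_eval,
    ← risingFactorial_eq_eval_ascPochhammer] at h
  rw [eq_div_iff (by positivity), ← h, Ring.choose, mul_comm]
  congr 2
  ring

lemma tendsto_risingFactorial_atTop {n : ℕ} (hn : n ≠ 0) :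
    Tendsto (fun c ↦ risingFactorial c n) atTop atTop := by
  induction n, Nat.one_le_iff_ne_zero.2 hn using Nat.le_induction with
  | base => exact tendsto_id.congr fun c ↦ by simp [risingFactorial]
  | succ n hn ih =>
    exact (ih (by omega)).atTop_mul_atTop₀ (tendsto_atTop_add_const_right _ _ tendsto_id)

/-- The shifted harmonic number `1/a + 1/(a+1) + ⋯ + 1/(a+n-1)`, which is the logarithmic
derivative of the rising factorial `(a)_n`. -/
noncomputable def shiftedHarmonic (a : ℝ) (n : ℕ) : ℝ := ∑ i ∈ range n, (a + i)⁻¹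

lemma shiftedHarmonic_zero (a : ℝ) : shiftedHarmonic a 0 = 0 := sum_range_zero _

lemma shiftedHarmonic_succ (a : ℝ) (n : ℕ) :
    shiftedHarmonic a (n + 1) = shiftedHarmonic a n + (a + n)⁻¹ := sum_range_succ _ _

lemma shiftedHarmonic_succ_left (a : ℝ) (n : ℕ) :
    shiftedHarmonic a (n + 1) = shiftedHarmonic (a + 1) n + a⁻¹ := by
  simp [shiftedHarmonic, sum_range_succ', add_assoc, add_comm (1 : ℝ)]

lemma hasDerivAt_risingFactorial (ha : 0 < a) (n : ℕ) :
    HasDerivAt (fun a ↦ risingFactorial a n) (risingFactorial a n * shiftedHarmonic a n) a := by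
  induction n with
  | zero => simpa [risingFactorial, shiftedHarmonic_zero] using hasDerivAt_const a (1 : ℝ)
  | succ n ih =>
    refine (ih.mul ((hasDerivAt_id a).add_const (n : ℝ))).congr_deriv ?_
    rw [risingFactorial_succ, shiftedHarmonic_succ, id]
    field_simp

lemma shiftedHarmonic_nonneg (ha : 0 < a) (n : ℕ) : 0 ≤ shiftedHarmonic a n :=
  sum_nonneg fun i _ ↦ by positivity

lemma shiftedHarmonic_mono (ha : 0 < a) : Monotone (shiftedHarmonic a) :=
  monotone_nat_of_le_succ fun n ↦ by
    rw [shiftedHarmonic_succ]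
    exact le_add_of_nonneg_right (by positivity)

lemma abs_shiftedHarmonic_le (ha : 0 < a) (hac : a ≤ c) (n : ℕ) :
    |shiftedHarmonic c n| ≤ a⁻¹ * (n + 1) := by
  rw [abs_of_nonneg (shiftedHarmonic_nonneg (ha.trans_le hac) n)]
  calc shiftedHarmonic c n ≤ ∑ _i ∈ range n, a⁻¹ := by
        refine sum_le_sum fun i _ ↦ inv_anti₀ ha ?_
        exact hac.trans (le_add_of_nonneg_right i.cast_nonneg)
    _ = a⁻¹ * n := by simp [mul_comm]
    _ ≤ a⁻¹ * (n + 1) := by gcongr; simp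

lemma tendsto_shiftedHarmonic_atTop (ha : 0 < a) :
    Tendsto (shiftedHarmonic a) atTop atTop := by
  have hpos (i : ℕ) : 0 ≤ (a + i)⁻¹ := by positivity
  refine (not_summable_iff_tendsto_nat_atTop_of_nonneg hpos).1 fun hsum ↦ ?_
  refine Real.not_summable_natCast_inv ((summable_nat_add_iff 1).1 ?_)
  refine (hsum.mul_left (a + 1)).of_nonneg_of_le (fun i ↦ by positivity) fun i ↦ ?_
  rw [← div_eq_mul_inv, inv_eq_one_div, div_le_div_iff₀ (by positivity) (by positivity)]
  push_cast
  nlinarith [mul_nonneg ha.le (i.cast_nonneg (α := ℝ))]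

lemma exists_shiftedHarmonic_sign_change (ha : 0 < a) (t : ℝ) :
    ∃ J : ℕ, (∀ n < J, shiftedHarmonic a n - t ≤ 0) ∧ ∀ n ≥ J, 0 ≤ shiftedHarmonic a n - t := by
  have hex : ∃ J, t ≤ shiftedHarmonic a J :=
    ((tendsto_shiftedHarmonic_atTop ha).eventually_ge_atTop t).exists
  refine ⟨Nat.find hex, fun n hn ↦ sub_nonpos.2 (not_le.1 (Nat.find_min hex hn)).le,
    fun n hn ↦ sub_nonneg.2 ?_⟩
  exact (Nat.find_spec hex).trans (shiftedHarmonic_mono ha hn)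

lemma risingFactorial_div_le_exp (ha : 0 < a) (hac : a ≤ c) (n : ℕ) :
    risingFactorial a n / risingFactorial c n ≤
      Real.exp (-((c - a) * (a / c) * shiftedHarmonic a n)) := by
  have hc : 0 < c := ha.trans_le hac
  induction n with
  | zero => simp [risingFactorial, shiftedHarmonic_zero]
  | succ n ih =>
    have hinv : a / c * (a + n)⁻¹ ≤ (c + n)⁻¹ := by
      rw [← div_eq_mul_inv, div_div, inv_eq_one_div,
        div_le_div_iff₀ (by positivity) (by positivity)]
      nlinarith [mul_le_mul_of_nonneg_right hac (n.cast_nonneg (α := ℝ))]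
    have hratio : (a + n) / (c + n) ≤ Real.exp (-((c - a) * (a / c) * (a + n)⁻¹)) :=
      calc (a + n) / (c + n) = -((c - a) * (c + n)⁻¹) + 1 := by field_simp; ring
        _ ≤ -((c - a) * (a / c) * (a + n)⁻¹) + 1 := by
          rw [mul_assoc]
          gcongr
        _ ≤ _ := Real.add_one_le_exp _
    rw [risingFactorial_succ, risingFactorial_succ, mul_div_mul_comm, shiftedHarmonic_succ,
      mul_add, neg_add, Real.exp_add]
    exact mul_le_mul ih hratio (by positivity) (Real.exp_pos _).le

lemma tendsto_risingFactorial_div_mul_shiftedHarmonic (ha : 0 < a) (hac : a < c) :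
    Tendsto (fun n ↦ risingFactorial a n / risingFactorial c n * shiftedHarmonic a n)
      atTop (𝓝 0) := by
  have hc : 0 < c := ha.trans hac
  set r := (c - a) * (a / c)
  have hr : 0 < r := mul_pos (sub_pos.2 hac) (by positivity)
  have hexp : Tendsto (fun n ↦ r⁻¹ * ((r * shiftedHarmonic a n) ^ 1 *
      Real.exp (-(r * shiftedHarmonic a n)))) atTop (𝓝 0) := by
    simpa only [mul_zero, Function.comp_def] using
      ((Real.tendsto_pow_mul_exp_neg_atTop_nhds_zero 1).comp
        ((tendsto_shiftedHarmonic_atTop ha).const_mul_atTop hr)).const_mul r⁻¹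
  refine squeeze_zero (fun n ↦ ?_) (fun n ↦ ?_) hexp
  · exact mul_nonneg (div_pos (risingFactorial_pos ha n) (risingFactorial_pos hc n)).le
      (shiftedHarmonic_nonneg ha n)
  · calc _ ≤ Real.exp (-(r * shiftedHarmonic a n)) * shiftedHarmonic a n :=
          mul_le_mul_of_nonneg_right (risingFactorial_div_le_exp ha hac.le n)
            (shiftedHarmonic_nonneg ha n)
      _ = _ := by field_simp

-- Summation by parts, since `(c + n) (a)_{n+1} / (c)_{n+1} = (a + n) (a)_n / (c)_n`.
lemma sum_risingFactorial_div_mul_shiftedHarmonic (ha : 0 < a) (hc : 0 < c) (N : ℕ) :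
    ∑ n ∈ range N, risingFactorial a n / risingFactorial c n *
        ((c - a) * shiftedHarmonic a n - 1) =
      ∑ n ∈ range N, risingFactorial a n / risingFactorial c n * shiftedHarmonic a n -
        (N + (c - 1)) * (risingFactorial a N / risingFactorial c N * shiftedHarmonic a N) := by
  induction N with
  | zero => simp [shiftedHarmonic_zero]
  | succ N ih =>
    have := (risingFactorial_pos hc N).ne'
    rw [sum_range_succ, sum_range_succ, ih, risingFactorial_succ, risingFactorial_succ,
      shiftedHarmonic_succ]
    push_cast
    field_simp
    ring

lemma exists_sum_risingFactorial_div_mul_pos (ha : 0 < a) (hac : a < c) :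
    ∃ N : ℕ, (c - a)⁻¹ ≤ shiftedHarmonic a N ∧
      0 < ∑ n ∈ range N, risingFactorial a n / risingFactorial c n *
        (shiftedHarmonic a n - (c - a)⁻¹) := by
  have hc : 0 < c := ha.trans hac
  have hca : 0 < c - a := sub_pos.2 hac
  have hratio (n : ℕ) : 0 < risingFactorial a n / risingFactorial c n :=
    div_pos (risingFactorial_pos ha n) (risingFactorial_pos hc n)
  have hone : 0 < risingFactorial a 1 / risingFactorial c 1 * shiftedHarmonic a 1 :=
    mul_pos (hratio 1) (by simpa [shiftedHarmonic] using ha)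
  obtain ⟨N, hlt, hN⟩ := ((frequently_add_mul_lt_sum_range
    (fun n ↦ mul_nonneg (hratio n).le (shiftedHarmonic_nonneg ha n)) hone
    (tendsto_risingFactorial_div_mul_shiftedHarmonic ha hac) (c - 1)).and_eventually
    ((tendsto_shiftedHarmonic_atTop ha).eventually_ge_atTop (c - a)⁻¹)).exists
  refine ⟨N, hN, pos_of_mul_pos_right (a := c - a) ?_ hca.le⟩
  calc 0 < ∑ n ∈ range N, risingFactorial a n / risingFactorial c n *
        ((c - a) * shiftedHarmonic a n - 1) := by
        rw [sum_risingFactorial_div_mul_shiftedHarmonic ha hc]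
        exact sub_pos.2 hlt
    _ = _ := by
        rw [mul_sum]
        refine sum_congr rfl fun n _ ↦ ?_
        field_simp

end RisingFactorial

section HypergeometricCoefficients

open Finset Topology

variable {a b c x : ℝ} {m : ℕ → ℝ} {K : ℝ}

/-- The coefficient `(a)_n (b)_n / ((c)_n n!)` of the hypergeometric series `F(a,b,c,·)`. -/
noncomputable def hypCoeff (a b c : ℝ) (n : ℕ) : ℝ :=
  risingFactorial a n * risingFactorial b n / (risingFactorial c n * (n.factorial : ℝ))

lemma hypF_eq_tsum (a b c x : ℝ) : hypF a b c x = ∑' n, hypCoeff a b c n * x ^ n := rfl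

lemma hypCoeff_zero (a b c : ℝ) : hypCoeff a b c 0 = 1 := by simp [hypCoeff, risingFactorial]

lemma hypCoeff_pos (ha : 0 < a) (hb : 0 < b) (hc : 0 < c) (n : ℕ) : 0 < hypCoeff a b c n := by
  have := risingFactorial_pos ha n
  have := risingFactorial_pos hb n
  have := risingFactorial_pos hc n
  unfold hypCoeff
  positivity

lemma hypCoeff_succ_mul (hc : 0 < c) (a b : ℝ) (n : ℕ) :
    hypCoeff a b c (n + 1) * ((c + n) * (n + 1)) = hypCoeff a b c n * ((a + n) * (b + n)) := by
  have := (risingFactorial_pos hc n).ne'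
  simp only [hypCoeff, risingFactorial_succ, Nat.factorial_succ]
  push_cast
  field_simp

lemma hypCoeff_succ (hc : 0 < c) (a b : ℝ) (n : ℕ) :
    hypCoeff a b c (n + 1) = hypCoeff a b c n * ((a + n) * (b + n)) / ((c + n) * (n + 1)) :=
  eq_div_of_mul_eq (by positivity) (hypCoeff_succ_mul hc a b n)

lemma hypCoeff_succ_left (hc : 0 < c) (a b : ℝ) (n : ℕ) :
    hypCoeff a b c (n + 1) * (n + 1) = a * b / c * hypCoeff (a + 1) (b + 1) (c + 1) n := by
  have := (risingFactorial_pos (add_pos hc one_pos) n).ne'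
  simp only [hypCoeff, risingFactorial_succ_left, Nat.factorial_succ]
  push_cast
  field_simp

lemma hypCoeff_add_one_left (hc : 0 < c) (a b : ℝ) (n : ℕ) :
    a / c * hypCoeff (a + 1) b (c + 1) n = hypCoeff a b c n * (a + n) / (c + n) := by
  have hc0 := (risingFactorial_pos hc n).ne'
  have hc1 := (risingFactorial_pos (add_pos hc one_pos) n).ne'
  have hshift (d : ℝ) : risingFactorial d n * (d + n) = d * risingFactorial (d + 1) n :=
    risingFactorial_succ_left d n
  unfold hypCoeff
  field_simp
  linear_combination risingFactorial b n *
    (a * risingFactorial (a + 1) n * hshift c - c * risingFactorial (c + 1) n * hshift a)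

lemma hypCoeff_one_one (b : ℝ) (n : ℕ) :
    hypCoeff b 1 1 n = risingFactorial b n / (n.factorial : ℝ) := by
  have := (risingFactorial_pos one_pos n).ne'
  unfold hypCoeff
  field_simp

lemma abs_hypCoeff_le_abs_hypCoeff {a' : ℝ} (h : |a| ≤ a') (b c : ℝ) (n : ℕ) :
    |hypCoeff a b c n| ≤ |hypCoeff a' b c n| := by
  unfold hypCoeff
  have hle := (abs_risingFactorial_le h n).trans (le_abs_self _)
  simp only [abs_div, abs_mul]
  gcongr

lemma abs_hypCoeff_le_of_abs_le (hc : 0 < c) (hac : |a| ≤ c) (b : ℝ) (n : ℕ) :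
    |hypCoeff a b c n| ≤ |hypCoeff b 1 1 n| := by
  refine (abs_hypCoeff_le_abs_hypCoeff hac b c n).trans_eq ?_
  have := (risingFactorial_pos hc n).ne'
  rw [hypCoeff_one_one, hypCoeff]
  congr 1
  field_simp

lemma tendsto_hypCoeff_atTop_nhds_zero (a b : ℝ) {n : ℕ} (hn : n ≠ 0) :
    Tendsto (fun c ↦ hypCoeff a b c n) atTop (𝓝 0) :=
  ((tendsto_risingFactorial_atTop hn).atTop_mul_const (by positivity)).const_div_atTop _

lemma summable_succ_mul_hypCoeff (hc : 0 < c) (hx : |x| < 1) (a b : ℝ) :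
    Summable fun n : ℕ ↦ ((n : ℝ) + 1) * (hypCoeff a b c n * x ^ n) := by
  obtain ⟨r, hxr, hr⟩ := exists_between hx
  have hlim (d e : ℝ) : Tendsto (fun n : ℕ ↦ (d + n) / (e + n)) atTop (𝓝 1) := by
    simpa using tendsto_add_mul_div_add_mul_atTop_nhds d e 1 one_ne_zero
  have hratio : Tendsto (fun n : ℕ ↦ |(2 + n) / (1 + n) * ((a + n) / (c + n)) *
      ((b + n) / (1 + n)) * x|) atTop (𝓝 |x|) := by
    simpa using ((((hlim 2 1).mul (hlim a c)).mul (hlim b 1)).mul_const x).abs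
  refine summable_of_ratio_norm_eventually_le hr ?_
  filter_upwards [hratio.eventually_le_const hxr] with n hn
  refine le_trans (le_of_eq ?_) (mul_le_mul_of_nonneg_right hn (norm_nonneg _))
  rw [← Real.norm_eq_abs, ← norm_mul, hypCoeff_succ hc]
  congr 1
  push_cast
  field_simp
  ring

lemma summable_hypCoeff_mul (hc : 0 < c) (hx : |x| < 1) (a b : ℝ)
    (hm : ∀ n : ℕ, |m n| ≤ K * (n + 1)) : Summable fun n ↦ hypCoeff a b c n * m n * x ^ n := by
  refine ((summable_succ_mul_hypCoeff hc hx a b).norm.mul_left K).of_norm_bounded fun n ↦ ?_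
  calc ‖hypCoeff a b c n * m n * x ^ n‖ = |m n| * ‖hypCoeff a b c n * x ^ n‖ := by
        rw [mul_right_comm, norm_mul, mul_comm, Real.norm_eq_abs (m n)]
    _ ≤ K * (n + 1) * ‖hypCoeff a b c n * x ^ n‖ := by gcongr; exact hm n
    _ = K * ‖((n : ℝ) + 1) * (hypCoeff a b c n * x ^ n)‖ := by
        rw [norm_mul ((n : ℝ) + 1), Real.norm_of_nonneg n.cast_add_one_pos.le, mul_assoc]

lemma summable_hypCoeff (hc : 0 < c) (hx : |x| < 1) (a b : ℝ) :
    Summable fun n ↦ hypCoeff a b c n * x ^ n := by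
  simpa using summable_hypCoeff_mul hc hx a b (m := 1) (K := 1) fun n ↦ by simp

lemma summable_hypCoeff_mul_shiftedHarmonic (ha : 0 < a) (hc : 0 < c) (hx : |x| < 1) (b : ℝ) :
    Summable fun n ↦ hypCoeff a b c n * shiftedHarmonic a n * x ^ n :=
  summable_hypCoeff_mul hc hx a b (abs_shiftedHarmonic_le ha le_rfl)

lemma tendsto_tsum_hypCoeff_mul (a b : ℝ) (hx : |x| < 1) (hm : ∀ n : ℕ, |m n| ≤ K * (n + 1)) :
    Tendsto (fun c ↦ ∑' n, hypCoeff a b c n * m n * x ^ n) atTop (𝓝 (m 0)) := by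
  have hsum := (summable_hypCoeff_mul one_pos hx b 1 hm).norm
  have hterm (n : ℕ) : Tendsto (fun c ↦ hypCoeff a b c n * m n * x ^ n) atTop
      (𝓝 (if n = 0 then m 0 else 0)) := by
    rcases eq_or_ne n 0 with rfl | hn
    · simp [hypCoeff_zero]
    · simpa [hn] using ((tendsto_hypCoeff_atTop_nhds_zero a b hn).mul_const (m n)).mul_const (x ^ n)
  rw [← tsum_ite_eq 0 fun _ ↦ m 0]
  refine tendsto_tsum_of_dominated_convergence hsum hterm ?_
  filter_upwards [eventually_ge_atTop |a|, eventually_gt_atTop 0] with c hac hc n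
  have hle := abs_hypCoeff_le_of_abs_le hc hac b n
  simp only [norm_mul, Real.norm_eq_abs]
  gcongr

end HypergeometricCoefficients

section LogDerivative

open Finset Topology

variable {a b c x : ℝ}

/-- The partial derivative `∂F/∂a` of the hypergeometric function in its first parameter. -/
noncomputable def hypDa (a b c x : ℝ) : ℝ :=
  ∑' n, hypCoeff a b c n * shiftedHarmonic a n * x ^ n

/-- The logarithmic derivative `(∂F/∂a) / F` of the hypergeometric function in its first
parameter. -/
noncomputable def hypLogDeriv (a b c x : ℝ) : ℝ := hypDa a b c x / hypF a b c x

lemma hypF_pos (ha : 0 < a) (hb : 0 < b) (hc : 0 < c) (hx : x ∈ Set.Ico 0 1) :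
    0 < hypF a b c x := by
  have hx1 : |x| < 1 := (abs_of_nonneg hx.1).trans_lt hx.2
  refine (summable_hypCoeff hc hx1 a b).tsum_pos (fun n ↦ ?_) 0 ?_
  · exact mul_nonneg (hypCoeff_pos ha hb hc n).le (pow_nonneg hx.1 n)
  · simp [hypCoeff_zero]

lemma hasDerivAt_hypF (ha : 0 < a) (hc : 0 < c) (hx : |x| < 1) (b : ℝ) :
    HasDerivAt (fun a ↦ hypF a b c x) (hypDa a b c x) a := by
  have ha2 : 0 < a / 2 := half_pos ha
  have hmem : a ∈ Set.Ioo (a / 2) (a + 1) := ⟨half_lt_self ha, lt_add_one a⟩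
  refine hasDerivAt_tsum_of_isPreconnected
    (u := fun n : ℕ ↦ (a / 2)⁻¹ * ‖((n : ℝ) + 1) * (hypCoeff (a + 1) b c n * x ^ n)‖)
    (g := fun n y ↦ hypCoeff y b c n * x ^ n)
    (g' := fun n y ↦ hypCoeff y b c n * shiftedHarmonic y n * x ^ n)
    ((summable_succ_mul_hypCoeff hc hx (a + 1) b).norm.mul_left _) isOpen_Ioo isPreconnected_Ioo
    (fun n y hy ↦ ?_) (fun n y hy ↦ ?_) hmem (summable_hypCoeff hc hx a b) hmem
  · have hderiv := (((hasDerivAt_risingFactorial (ha2.trans hy.1) n).mul_const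
      (risingFactorial b n)).div_const (risingFactorial c n * (n.factorial : ℝ))).mul_const (x ^ n)
    refine hderiv.congr_deriv ?_
    unfold hypCoeff
    ring
  · have hcoeff : |hypCoeff y b c n| ≤ |hypCoeff (a + 1) b c n| :=
      abs_hypCoeff_le_abs_hypCoeff (by rw [abs_of_pos (ha2.trans hy.1)]; exact hy.2.le) b c n
    have hharm : |shiftedHarmonic y n| ≤ (a / 2)⁻¹ * (n + 1) :=
      abs_shiftedHarmonic_le ha2 hy.1.le n
    simp only [norm_mul, Real.norm_eq_abs, abs_of_pos (n.cast_add_one_pos (α := ℝ))]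
    calc _ ≤ |hypCoeff (a + 1) b c n| * ((a / 2)⁻¹ * (n + 1)) * |x ^ n| := by gcongr
      _ = _ := by ring

lemma hasDerivAt_log_hypF (ha : 0 < a) (hc : 0 < c) (hx : |x| < 1) (h : hypF a b c x ≠ 0) :
    HasDerivAt (fun a ↦ Real.log (hypF a b c x)) (hypLogDeriv a b c x) a :=
  (hasDerivAt_hypF ha hc hx b).log h

lemma tendsto_hypLogDeriv_atTop (ha : 0 < a) (b : ℝ) (hx : |x| < 1) :
    Tendsto (fun c ↦ hypLogDeriv a b c x) atTop (𝓝 0) := by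
  have hDa : Tendsto (fun c ↦ hypDa a b c x) atTop (𝓝 (shiftedHarmonic a 0)) :=
    tendsto_tsum_hypCoeff_mul a b hx (abs_shiftedHarmonic_le ha le_rfl)
  have hF : Tendsto (fun c ↦ hypF a b c x) atTop (𝓝 1) := by
    simpa [hypF_eq_tsum] using
      tendsto_tsum_hypCoeff_mul a b hx (m := fun _ ↦ 1) (K := 1) fun n ↦ by simp
  simpa [shiftedHarmonic_zero, hypLogDeriv, Pi.div_def] using hDa.div hF one_ne_zero

lemma summable_hypCoeff_mul_shiftedHarmonic_sub (ha : 0 < a) (hc : 0 < c) (hx : |x| < 1)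
    (b t : ℝ) : Summable fun n ↦ hypCoeff a b c n * (shiftedHarmonic a n - t) * x ^ n := by
  simpa only [mul_sub, sub_mul, mul_right_comm _ t] using
    (summable_hypCoeff_mul_shiftedHarmonic ha hc hx b).sub
      ((summable_hypCoeff hc hx a b).mul_right t)

lemma tsum_hypCoeff_mul_shiftedHarmonic_sub (ha : 0 < a) (hb : 0 < b) (hc : 0 < c)
    (hx : x ∈ Set.Ico 0 1) (t : ℝ) :
    ∑' n, hypCoeff a b c n * (shiftedHarmonic a n - t) * x ^ n =
      (hypLogDeriv a b c x - t) * hypF a b c x := by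
  have hx1 : |x| < 1 := (abs_of_nonneg hx.1).trans_lt hx.2
  simp only [mul_sub, sub_mul, mul_right_comm _ t]
  rw [(summable_hypCoeff_mul_shiftedHarmonic ha hc hx1 b).tsum_sub
    ((summable_hypCoeff hc hx1 a b).mul_right t), tsum_mul_right, ← hypF_eq_tsum, ← hypDa,
    hypLogDeriv, div_mul_cancel₀ _ (hypF_pos ha hb hc hx).ne', mul_comm t]

lemma hypLogDeriv_pos (ha : 0 < a) (hb : 0 < b) (hc : 0 < c) (hx : x ∈ Set.Ioo 0 1) :
    0 < hypLogDeriv a b c x := by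
  have hx1 : |x| < 1 := (abs_of_pos hx.1).trans_lt hx.2
  have hcoeff := hypCoeff_pos ha hb hc
  refine div_pos ((summable_hypCoeff_mul_shiftedHarmonic ha hc hx1 b).tsum_pos (fun n ↦ ?_) 1 ?_)
    (hypF_pos ha hb hc ⟨hx.1.le, hx.2⟩)
  · exact mul_nonneg (mul_nonneg (hcoeff n).le (shiftedHarmonic_nonneg ha n))
      (pow_nonneg hx.1.le n)
  · exact mul_pos (mul_pos (hcoeff 1) (by simpa [shiftedHarmonic] using ha)) (pow_pos hx.1 1)

lemma strictMonoOn_hypLogDeriv (ha : 0 < a) (hb : 0 < b) (hc : 0 < c) :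
    StrictMonoOn (hypLogDeriv a b c) (Set.Ioo 0 1) := by
  intro x hx y hy hxy
  set t := hypLogDeriv a b c x with ht
  obtain ⟨J, hneg, hpos⟩ := exists_shiftedHarmonic_sign_change ha t
  have hcoeff := hypCoeff_pos ha hb hc
  have hsum {z : ℝ} (hz : z ∈ Set.Ioo 0 1) :=
    summable_hypCoeff_mul_shiftedHarmonic_sub ha hc ((abs_of_pos hz.1).trans_lt hz.2) b t
  have htsum {z : ℝ} (hz : z ∈ Set.Ioo 0 1) :=
    tsum_hypCoeff_mul_shiftedHarmonic_sub ha hb hc ⟨hz.1.le, hz.2⟩ t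
  have hzero : hypCoeff a b c 0 * (shiftedHarmonic a 0 - t) < 0 := by
    simpa [hypCoeff_zero, shiftedHarmonic_zero] using hypLogDeriv_pos ha hb hc hx
  have hy_pos : 0 < (hypLogDeriv a b c y - t) * hypF a b c y := by
    rw [← htsum hy]
    refine tsum_mul_pow_pos_of_sign_change
      (fun n hn ↦ mul_nonpos_of_nonneg_of_nonpos (hcoeff n).le (hneg n hn))
      (fun n hn ↦ mul_nonneg (hcoeff n).le (hpos n hn)) hzero hx.1 hxy (hsum hx) (hsum hy) ?_
    rw [htsum hx, ← ht, sub_self, zero_mul]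
  exact sub_pos.1 (pos_of_mul_pos_left hy_pos (hypF_pos ha hb hc ⟨hy.1.le, hy.2⟩).le)

lemma monotone_risingFactorial_div_factorial (hb : 1 ≤ b) :
    Monotone fun n ↦ risingFactorial b n / (n.factorial : ℝ) := by
  refine monotone_nat_of_le_succ fun n ↦ ?_
  have := risingFactorial_pos (one_pos.trans_le hb) n
  rw [risingFactorial_succ, Nat.factorial_succ, div_le_div_iff₀ (by positivity) (by positivity)]
  push_cast
  rw [mul_assoc, add_comm b]
  gcongr

lemma exists_lt_hypLogDeriv (ha : 0 < a) (hb : 1 ≤ b) (hac : a < c) :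
    ∃ x ∈ Set.Ioo (0 : ℝ) 1, (c - a)⁻¹ < hypLogDeriv a b c x := by
  have hb0 : 0 < b := one_pos.trans_le hb
  have hc : 0 < c := ha.trans hac
  set t := (c - a)⁻¹
  obtain ⟨N, hN, hsum⟩ := exists_sum_risingFactorial_div_mul_pos ha hac
  obtain ⟨J, hneg, hpos⟩ := exists_shiftedHarmonic_sign_change ha t
  have hratio (n : ℕ) : 0 ≤ risingFactorial a n / risingFactorial c n :=
    (div_pos (risingFactorial_pos ha n) (risingFactorial_pos hc n)).le
  have hJ : 0 < risingFactorial b J / (J.factorial : ℝ) :=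
    div_pos (risingFactorial_pos hb0 J) (by positivity)
  have hsum' : 0 < ∑ n ∈ range N, hypCoeff a b c n * (shiftedHarmonic a n - t) := by
    refine (mul_pos hJ hsum).trans_le ?_
    rw [mul_sum]
    refine sum_le_sum fun n _ ↦ (mul_le_mul_of_sign_change
      (monotone_risingFactorial_div_factorial hb)
      (fun n hn ↦ mul_nonpos_of_nonneg_of_nonpos (hratio n) (hneg n hn))
      (fun n hn ↦ mul_nonneg (hratio n) (hpos n hn)) n).trans_eq ?_
    unfold hypCoeff
    field_simp
  obtain ⟨x, hx, hxpos⟩ := exists_tsum_mul_pow_pos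
    (fun n hn ↦ mul_nonneg (hypCoeff_pos ha hb0 hc n).le
      (sub_nonneg.2 (hN.trans (shiftedHarmonic_mono ha hn)))) hsum'
    fun x hx ↦ summable_hypCoeff_mul_shiftedHarmonic_sub ha hc
      ((abs_of_pos hx.1).trans_lt hx.2) b t
  have hx' : x ∈ Set.Ico 0 1 := ⟨hx.1.le, hx.2⟩
  rw [tsum_hypCoeff_mul_shiftedHarmonic_sub ha hb0 hc hx'] at hxpos
  exact ⟨x, hx, sub_pos.1 (pos_of_mul_pos_left hxpos (hypF_pos ha hb0 hc hx').le)⟩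

lemma hypLogDeriv_zero_right (a b c : ℝ) : hypLogDeriv a b c 0 = 0 := by
  have hDa : hypDa a b c 0 = 0 := by
    rw [hypDa, tsum_eq_single 0 fun n hn ↦ by simp [hn]]
    simp [shiftedHarmonic_zero]
  rw [hypLogDeriv, hDa, zero_div]

lemma continuousOn_hypLogDeriv (ha : 0 < a) (hb : 0 < b) (hc : 0 < c) {y : ℝ}
    (hy : y ∈ Set.Ico 0 1) : ContinuousOn (hypLogDeriv a b c) (Set.Icc 0 y) := by
  have hy1 : |y| < 1 := (abs_of_nonneg hy.1).trans_lt hy.2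
  exact (continuousOn_tsum_mul_pow (summable_hypCoeff_mul_shiftedHarmonic ha hc hy1 b)).div
    (continuousOn_tsum_mul_pow (summable_hypCoeff hc hy1 a b))
    fun x hx ↦ (hypF_pos ha hb hc ⟨hx.1, hx.2.trans_lt hy.2⟩).ne'

lemma exists_hypLogDeriv_eq (ha : 0 < a) (hb : 1 ≤ b) (hac : a < c) :
    ∃ x ∈ Set.Ioo (0 : ℝ) 1, hypLogDeriv a b c x = (c - a)⁻¹ := by
  obtain ⟨y, hy, hlt⟩ := exists_lt_hypLogDeriv ha hb hac
  have hcont := continuousOn_hypLogDeriv ha (one_pos.trans_le hb) (ha.trans hac) ⟨hy.1.le, hy.2⟩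
  have hmem : (c - a)⁻¹ ∈ Set.Ioo (hypLogDeriv a b c 0) (hypLogDeriv a b c y) :=
    ⟨by rw [hypLogDeriv_zero_right]; exact inv_pos.2 (sub_pos.2 hac), hlt⟩
  obtain ⟨x, hx, hxeq⟩ := intermediate_value_Ioo hy.1.le hcont hmem
  exact ⟨x, ⟨hx.1, hx.2.trans hy.2⟩, hxeq⟩

end LogDerivative

section FormalSeries

open PowerSeries

variable {a b c : ℝ}

lemma coeff_X_mul_derivative (f : ℝ⟦X⟧) (n : ℕ) : coeff n (X * d⁄dX ℝ f) = n * coeff n f := by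
  cases n with
  | zero => simp
  | succ n =>
    rw [coeff_succ_X_mul, coeff_derivative]
    push_cast
    ring

lemma coeff_one_sub_X_mul_derivative (f : ℝ⟦X⟧) (n : ℕ) :
    coeff n ((1 - X) * d⁄dX ℝ f) = coeff (n + 1) f * (n + 1) - n * coeff n f := by
  rw [sub_mul, one_mul, map_sub, coeff_X_mul_derivative, coeff_derivative]

/-- The hypergeometric differential operator
`f ↦ x(1 - x)f'' + (c - (a + b + 1)x)f' - ab f` on formal power series. -/
noncomputable def hypOp (a b c : ℝ) (f : ℝ⟦X⟧) : ℝ⟦X⟧ :=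
  X * (1 - X) * d⁄dX ℝ (d⁄dX ℝ f) + (C c - C (a + b + 1) * X) * d⁄dX ℝ f - C (a * b) * f

lemma coeff_hypOp (a b c : ℝ) (f : ℝ⟦X⟧) (n : ℕ) :
    coeff n (hypOp a b c f) =
      coeff (n + 1) f * ((c + n) * (n + 1)) - coeff n f * ((a + n) * (b + n)) := by
  have heuler : hypOp a b c f = X * d⁄dX ℝ (d⁄dX ℝ f) + C c * d⁄dX ℝ f -
      X * d⁄dX ℝ (X * d⁄dX ℝ f) - C a * (X * d⁄dX ℝ f) - C b * (X * d⁄dX ℝ f) -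
      C (a * b) * f := by
    simp only [hypOp, Derivation.leibniz, derivative_X, smul_eq_mul, map_add, map_one]
    ring
  rw [heuler]
  simp only [map_add, map_sub, coeff_C_mul, coeff_X_mul_derivative, coeff_derivative]
  ring

/-- The formal hypergeometric series `F(a,b,c,X)`. -/
noncomputable def hypSeries (a b c : ℝ) : ℝ⟦X⟧ := mk (hypCoeff a b c)

/-- The formal power series of `∂F/∂a`, see `hypDa`. -/
noncomputable def hypDaSeries (a b c : ℝ) : ℝ⟦X⟧ :=
  mk fun n ↦ hypCoeff a b c n * shiftedHarmonic a n

lemma hypOp_hypSeries (hc : 0 < c) (a b : ℝ) : hypOp a b c (hypSeries a b c) = 0 := by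
  ext n
  simp [coeff_hypOp, hypSeries, hypCoeff_succ_mul hc]

lemma eq_hypSeries_of_hypOp_eq_zero (hc : 0 < c) {f : ℝ⟦X⟧} (h0 : coeff 0 f = 1)
    (hf : hypOp a b c f = 0) : f = hypSeries a b c := by
  ext n
  rw [hypSeries, coeff_mk]
  induction n with
  | zero => rw [h0, hypCoeff_zero]
  | succ n ih =>
    have hn : coeff n (hypOp a b c f) = 0 := by rw [hf, map_zero]
    rw [coeff_hypOp, ih, ← hypCoeff_succ_mul hc, sub_eq_zero] at hn
    exact mul_right_cancel₀ (by positivity) hn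

lemma hypOp_hypDaSeries (ha : 0 < a) (hc : 0 < c) (b : ℝ) :
    hypOp a b c (hypDaSeries a b c) =
      X * d⁄dX ℝ (hypSeries a b c) + C b * hypSeries a b c := by
  ext n
  simp only [coeff_hypOp, hypDaSeries, hypSeries, coeff_mk, map_add, coeff_X_mul_derivative,
    coeff_C_mul, shiftedHarmonic_succ]
  rw [mul_right_comm, hypCoeff_succ_mul hc]
  field_simp
  ring

lemma one_sub_X_mul_derivative_hypSeries (hc : 0 < c) (a b : ℝ) :
    (1 - X) * d⁄dX ℝ (hypSeries a b c) =
      C a * hypSeries a b c + C ((b - c) * (a / c)) * hypSeries (a + 1) b (c + 1) := by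
  ext n
  simp only [coeff_one_sub_X_mul_derivative, hypSeries, coeff_mk, map_add, coeff_C_mul,
    hypCoeff_succ hc]
  rw [mul_assoc (b - c), hypCoeff_add_one_left hc]
  field_simp
  ring

lemma hypSeries_eq_mul_hypSeries (hc : 0 < c) (a b : ℝ) :
    hypSeries a b c = hypSeries (a + b - c) 1 1 * hypSeries (c - a) (c - b) c := by
  refine (eq_hypSeries_of_hypOp_eq_zero hc (by simp [hypSeries, hypCoeff_zero]) ?_).symm
  have hP : (1 - X) * d⁄dX ℝ (hypSeries (a + b - c) 1 1) =
      C (a + b - c) * hypSeries (a + b - c) 1 1 := by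
    simpa using one_sub_X_mul_derivative_hypSeries one_pos (a + b - c) 1
  have hP' := congrArg (d⁄dX ℝ) hP
  have hG := hypOp_hypSeries hc (c - a) (c - b)
  simp only [hypOp, Derivation.leibniz, map_sub, Derivation.map_one_eq_zero, derivative_X,
    derivative_C, smul_eq_mul, map_add, map_mul, map_one] at hP hP' hG ⊢
  generalize hypSeries (a + b - c) 1 1 = P at *
  generalize hypSeries (c - a) (c - b) c = G at *
  linear_combination P * hG + X * G * hP' + (2 * X * d⁄dX ℝ G + C c * G) * hP

end FormalSeries

section Evaluation

open PowerSeries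

variable {a b c x s t : ℝ} {f g : ℝ⟦X⟧}

/-- The formal power series `f` converges at `x` with sum `s`. -/
def HasSumAt (f : ℝ⟦X⟧) (x s : ℝ) : Prop := HasSum (fun n ↦ coeff n f * x ^ n) s

lemma HasSumAt.sub (hf : HasSumAt f x s) (hg : HasSumAt g x t) : HasSumAt (f - g) x (s - t) := by
  simpa [HasSumAt, sub_mul] using HasSum.sub hf hg

lemma HasSumAt.C_mul (r : ℝ) (hf : HasSumAt f x s) : HasSumAt (C r * f) x (r * s) := by
  simpa [HasSumAt, mul_assoc] using HasSum.mul_left r hf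

lemma HasSumAt.mul (hf : HasSumAt f x s) (hg : HasSumAt g x t) : HasSumAt (f * g) x (s * t) := by
  have hcoeff (n : ℕ) : ∑ kl ∈ Finset.HasAntidiagonal.antidiagonal n,
      coeff kl.1 f * x ^ kl.1 * (coeff kl.2 g * x ^ kl.2) = coeff n (f * g) * x ^ n := by
    rw [coeff_mul, Finset.sum_mul]
    refine Finset.sum_congr rfl fun kl hkl ↦ ?_
    rw [← Finset.HasAntidiagonal.mem_antidiagonal.1 hkl, pow_add, mul_mul_mul_comm]
  have hfn := (HasSum.summable hf).norm
  have hgn := (HasSum.summable hg).norm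
  have hsum := (summable_norm_sum_mul_antidiagonal_of_summable_norm hfn hgn).of_norm.hasSum
  rw [← tsum_mul_tsum_eq_tsum_sum_antidiagonal_of_summable_norm hfn hgn, HasSum.tsum_eq hf,
    HasSum.tsum_eq hg] at hsum
  simpa only [HasSumAt, hcoeff] using hsum

lemma hasSumAt_hypSeries (hc : 0 < c) (hx : |x| < 1) (a b : ℝ) :
    HasSumAt (hypSeries a b c) x (hypF a b c x) := by
  simpa [HasSumAt, hypSeries, hypF_eq_tsum] using (summable_hypCoeff hc hx a b).hasSum

lemma hasSumAt_hypDaSeries (ha : 0 < a) (hc : 0 < c) (hx : |x| < 1) (b : ℝ) :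
    HasSumAt (hypDaSeries a b c) x (hypDa a b c x) := by
  simpa [HasSumAt, hypDaSeries, hypDa] using
    (summable_hypCoeff_mul_shiftedHarmonic ha hc hx b).hasSum

lemma hypF_one_one (hx : |x| < 1) (l : ℝ) : hypF l 1 1 x = (1 - x) ^ (-l) := by
  have hball : x ∈ Metric.eball (0 : ℝ) 1 := by
    simpa [enorm_eq_nnnorm, ← NNReal.coe_lt_coe] using hx
  have hsum := (Real.one_div_one_sub_rpow_hasFPowerSeriesOnBall_zero l).hasSum hball
  rw [Real.rpow_neg (by linarith [le_abs_self x]), ← one_div, ← zero_add x, ← hsum.tsum_eq,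
    hypF_eq_tsum]
  simp [hypCoeff_one_one, choose_eq_risingFactorial_div_factorial, mul_comm]

theorem hypF_eq_rpow_mul_hypF (hc : 0 < c) (hx : |x| < 1) (a b : ℝ) :
    hypF a b c x = (1 - x) ^ (c - a - b) * hypF (c - a) (c - b) c x := by
  have hmul := (hasSumAt_hypSeries one_pos hx (a + b - c) 1).mul
    (hasSumAt_hypSeries hc hx (c - a) (c - b))
  rw [← hypSeries_eq_mul_hypSeries hc, hypF_one_one hx, neg_sub, ← sub_sub] at hmul
  exact (hasSumAt_hypSeries hc hx a b).unique hmul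

end Evaluation

section Contiguity

open PowerSeries

variable {a b c s x r : ℝ} {f g : ℝ⟦X⟧}

lemma derivative_hypSeries (hc : 0 < c) (a b : ℝ) :
    d⁄dX ℝ (hypSeries a b c) = C (a * b / c) * hypSeries (a + 1) (b + 1) (c + 1) := by
  ext n
  simp [coeff_derivative, hypSeries, hypCoeff_succ_left hc]

lemma derivative_hypDaSeries (ha : 0 < a) (hc : 0 < c) (b : ℝ) :
    d⁄dX ℝ (hypDaSeries a b c) = C (a * b / c) * hypDaSeries (a + 1) (b + 1) (c + 1) +
      C (b / c) * hypSeries (a + 1) (b + 1) (c + 1) := by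
  ext n
  simp only [coeff_derivative, hypDaSeries, hypSeries, coeff_mk, map_add, coeff_C_mul]
  rw [mul_right_comm, hypCoeff_succ_left hc, shiftedHarmonic_succ_left]
  field_simp

/-- The Wronskian-type combination `∂F/∂a · F₊ - (∂F/∂a)₊ · F`, where `₊` raises all three
parameters by one. Its sign is that of the difference of the logarithmic derivatives
`hypLogDeriv a b c` and `hypLogDeriv (a + 1) (b + 1) (c + 1)`. -/
noncomputable def hypWronskian (a b c : ℝ) : ℝ⟦X⟧ :=
  hypDaSeries a b c * hypSeries (a + 1) (b + 1) (c + 1) -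
    hypDaSeries (a + 1) (b + 1) (c + 1) * hypSeries a b c

lemma C_mul_hypWronskian (ha : 0 < a) (hc : 0 < c) (b : ℝ) :
    C (a ^ 2 * b / c) * hypWronskian a b c =
      hypSeries a b c * d⁄dX ℝ (hypSeries a b c) -
        C a * (hypSeries a b c * d⁄dX ℝ (hypDaSeries a b c) -
          hypDaSeries a b c * d⁄dX ℝ (hypSeries a b c)) := by
  have hsq : C (a ^ 2 * b / c) = C a * C (a * b / c) := by rw [← map_mul]; ring_nf
  have hab : C (a * b / c) = C a * C (b / c) := by rw [← map_mul]; ring_nf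
  rw [derivative_hypSeries hc, derivative_hypDaSeries ha hc, hypWronskian, hsq]
  linear_combination -(hypSeries a b c * hypSeries (a + 1) (b + 1) (c + 1)) * hab

-- `F' / (a F)` solves a Riccati equation; differentiating it in `a` gives a linear equation.
lemma hypWronskian_ode (ha : 0 < a) (hb : b ≠ 0) (hc : 0 < c) :
    X * (1 - X) * d⁄dX ℝ (hypWronskian a b c) + (C c - C (a + b + 1) * X) * hypWronskian a b c =
      X * (C ((b - c) / c) *
        (hypSeries (a + 1) (b + 1) (c + 1) * hypSeries (a + 1) b (c + 1))) := by
  have hF := hypOp_hypSeries hc a b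
  have hM := hypOp_hypDaSeries ha hc b
  have hD := C_mul_hypWronskian ha hc b
  have hD' := congrArg (d⁄dX ℝ) hD
  have hF' := one_sub_X_mul_derivative_hypSeries hc a b
  have hS : C (a ^ 2 * b / c) * (C ((b - c) / c) *
      (hypSeries (a + 1) (b + 1) (c + 1) * hypSeries (a + 1) b (c + 1))) =
      d⁄dX ℝ (hypSeries a b c) * (C ((b - c) * (a / c)) * hypSeries (a + 1) b (c + 1)) := by
    have hconst : C (a ^ 2 * b / c) * C ((b - c) / c) = C (a * b / c) * C ((b - c) * (a / c)) := by
      simp only [← map_mul]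
      ring_nf
    rw [derivative_hypSeries hc]
    linear_combination
      (hypSeries (a + 1) (b + 1) (c + 1) * hypSeries (a + 1) b (c + 1)) * hconst
  refine mul_left_cancel₀ (a := C (a ^ 2 * b / c)) ?_ ?_
  · simpa using ⟨⟨ha.ne', hb⟩, hc.ne'⟩
  simp only [hypOp, Derivation.leibniz, map_sub, derivative_C, smul_eq_mul, map_add, map_mul,
    map_one] at hF hM hD hD' hF' hS ⊢
  generalize hypSeries a b c = F at *
  generalize hypDaSeries a b c = M at *
  linear_combination X * (1 - X) * hD' + (C c - (C a + C b + 1) * X) * hD +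
    (F + C a * M) * hF - C a * F * hM + X * d⁄dX ℝ F * hF' - X * hS

lemma coeff_succ_mul_of_ode (h : X * (1 - X) * d⁄dX ℝ f + (C c - C s * X) * f = X * g) (n : ℕ) :
    coeff (n + 1) f * (c + n + 1) = (s + n) * coeff n f + coeff n g := by
  have hsplit : X * (1 - X) * d⁄dX ℝ f + (C c - C s * X) * f =
      X * d⁄dX ℝ f - X * (X * d⁄dX ℝ f) + C c * f - X * (C s * f) := by ring
  have hn := congrArg (coeff (n + 1)) (hsplit.symm.trans h)
  simp only [map_add, map_sub, coeff_succ_X_mul, coeff_derivative, coeff_X_mul_derivative,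
    coeff_C_mul] at hn
  linear_combination hn

lemma coeff_nonneg_of_ode (hc : 0 < c) (hs : 0 ≤ s)
    (h : X * (1 - X) * d⁄dX ℝ f + (C c - C s * X) * f = X * g) (hg : ∀ n, 0 ≤ coeff n g) (n : ℕ) :
    0 ≤ coeff n f := by
  induction n with
  | zero =>
    have h0 : c * coeff 0 f = 0 := by simpa using congrArg (coeff 0) h
    exact (eq_zero_of_ne_zero_of_mul_left_eq_zero hc.ne' h0).ge
  | succ n ih =>
    have hn : 0 ≤ coeff (n + 1) f * (c + n + 1) := by
      rw [coeff_succ_mul_of_ode h]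
      exact add_nonneg (by positivity) (hg n)
    exact nonneg_of_mul_nonneg_left hn (by positivity)

lemma HasSumAt.pos_of_ode (hc : 0 < c) (hs : 0 ≤ s)
    (h : X * (1 - X) * d⁄dX ℝ f + (C c - C s * X) * f = X * g) (hg : ∀ n, 0 ≤ coeff n g)
    (hg0 : 0 < coeff 0 g) (hx : 0 < x) (hf : HasSumAt f x r) : 0 < r := by
  have hcoeff := coeff_nonneg_of_ode hc hs h hg
  have hone : 0 < coeff 1 f := by
    have h1 := coeff_succ_mul_of_ode h 0
    refine pos_of_mul_pos_left (b := c + (0 : ℕ) + 1) ?_ (by positivity)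
    rw [h1]
    exact add_pos_of_nonneg_of_pos (mul_nonneg (by positivity) (hcoeff 0)) hg0
  refine HasSum.tsum_eq hf ▸ (HasSum.summable hf).tsum_pos (fun n ↦ ?_) 1 (by positivity)
  exact mul_nonneg (hcoeff n) (by positivity)

lemma hypWronskian_sum_pos (ha : 0 < a) (hb : 0 < b) (hc : 0 < c) (hbc : b ≠ c)
    (hx : x ∈ Set.Ioo 0 1) :
    0 < (b - c) * (hypDa a b c x * hypF (a + 1) (b + 1) (c + 1) x -
      hypDa (a + 1) (b + 1) (c + 1) x * hypF a b c x) := by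
  have ha1 : 0 < a + 1 := by positivity
  have hb1 : 0 < b + 1 := by positivity
  have hc1 : 0 < c + 1 := by positivity
  have hx1 : |x| < 1 := (abs_of_pos hx.1).trans_lt hx.2
  have hsq : 0 < (b - c) ^ 2 / c := div_pos (sq_pos_of_ne_zero (sub_ne_zero.2 hbc)) hc
  set S := C ((b - c) ^ 2 / c) *
    (hypSeries (a + 1) (b + 1) (c + 1) * hypSeries (a + 1) b (c + 1)) with hS
  have hode : X * (1 - X) * d⁄dX ℝ (C (b - c) * hypWronskian a b c) +
      (C c - C (a + b + 1) * X) * (C (b - c) * hypWronskian a b c) = X * S := by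
    have hconst : C ((b - c) ^ 2 / c) = C (b - c) * C ((b - c) / c) := by
      rw [← map_mul]
      ring_nf
    rw [hS, hconst, Derivation.leibniz, derivative_C, smul_zero, add_zero, smul_eq_mul]
    linear_combination C (b - c) * hypWronskian_ode ha hb.ne' hc
  have hSnonneg (n : ℕ) : 0 ≤ coeff n S := by
    rw [hS, coeff_C_mul, coeff_mul]
    refine mul_nonneg hsq.le (Finset.sum_nonneg fun kl _ ↦ ?_)
    simpa [hypSeries] using (mul_pos (hypCoeff_pos ha1 hb1 hc1 _) (hypCoeff_pos ha1 hb hc1 _)).le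
  have hS0 : 0 < coeff 0 S := by simpa [hS, hypSeries, hypCoeff_zero] using hsq
  refine HasSumAt.pos_of_ode hc (by positivity) hode hSnonneg hS0 hx.1 (HasSumAt.C_mul _ ?_)
  exact ((hasSumAt_hypDaSeries ha hc hx1 b).mul (hasSumAt_hypSeries hc1 hx1 _ _)).sub
    ((hasSumAt_hypDaSeries ha1 hc1 hx1 _).mul (hasSumAt_hypSeries hc hx1 a b))

lemma mul_hypLogDeriv_sub_pos (ha : 0 < a) (hb : 0 < b) (hc : 0 < c) (hbc : b ≠ c)
    (hx : x ∈ Set.Ioo 0 1) :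
    0 < (b - c) * (hypLogDeriv a b c x - hypLogDeriv (a + 1) (b + 1) (c + 1) x) := by
  have hx' : x ∈ Set.Ico 0 1 := ⟨hx.1.le, hx.2⟩
  have hF := hypF_pos ha hb hc hx'
  have hF' := hypF_pos (add_pos ha one_pos) (add_pos hb one_pos) (add_pos hc one_pos) hx'
  rw [hypLogDeriv, hypLogDeriv, div_sub_div _ _ hF.ne' hF'.ne', ← mul_div_assoc,
    mul_comm (hypF a b c x) (hypDa (a + 1) _ _ _)]
  exact div_pos (hypWronskian_sum_pos ha hb hc hbc hx) (mul_pos hF hF')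

end Contiguity

section EulerReflection

variable {a b c x : ℝ}

lemma hypF_pos_of_lt (hc : 0 < c) (hac : a < c) (hbc : b < c) (hx : x ∈ Set.Ico 0 1) :
    0 < hypF a b c x := by
  rw [hypF_eq_rpow_mul_hypF hc ((abs_of_nonneg hx.1).trans_lt hx.2)]
  exact mul_pos (Real.rpow_pos_of_pos (sub_pos.2 hx.2) _)
    (hypF_pos (sub_pos.2 hac) (sub_pos.2 hbc) hc hx)

lemma log_hypF_eq (hc : 0 < c) (hac : a < c) (hbc : b < c) (hx : x ∈ Set.Ico 0 1) :
    Real.log (hypF a b c x) =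
      (c - a - b) * Real.log (1 - x) + Real.log (hypF (c - a) (c - b) c x) := by
  have hx' : 0 < 1 - x := sub_pos.2 hx.2
  have hF := hypF_pos (sub_pos.2 hac) (sub_pos.2 hbc) hc hx
  rw [hypF_eq_rpow_mul_hypF hc ((abs_of_nonneg hx.1).trans_lt hx.2),
    Real.log_mul (Real.rpow_pos_of_pos hx' _).ne' hF.ne', Real.log_rpow hx']

lemma hypLogDeriv_eq_neg_log_sub (ha : 0 < a) (hac : a < c) (hbc : b < c)
    (hx : x ∈ Set.Ico 0 1) :
    hypLogDeriv a b c x = -Real.log (1 - x) - hypLogDeriv (c - a) (c - b) c x := by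
  have hc : 0 < c := ha.trans hac
  have hx1 : |x| < 1 := (abs_of_nonneg hx.1).trans_lt hx.2
  have hreflect : HasDerivAt (fun y ↦ c - y) (-1) a := (hasDerivAt_id a).const_sub c
  have hlogF : HasDerivAt (fun y ↦ Real.log (hypF (c - y) (c - b) c x))
      (hypLogDeriv (c - a) (c - b) c x * -1) a :=
    (hasDerivAt_log_hypF (sub_pos.2 hac) hc hx1
      (hypF_pos (sub_pos.2 hac) (sub_pos.2 hbc) hc hx).ne').comp a hreflect
  have hsum := ((hreflect.sub_const b).mul_const (Real.log (1 - x))).add hlogF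
  have heq : (fun y ↦ Real.log (hypF y b c x)) =ᶠ[nhds a]
      fun y ↦ (c - y - b) * Real.log (1 - x) + Real.log (hypF (c - y) (c - b) c x) := by
    filter_upwards [Iio_mem_nhds hac] with y hy using log_hypF_eq hc hy hbc hx
  have hF := (hypF_pos_of_lt hc hac hbc hx).ne'
  linarith [(hasDerivAt_log_hypF ha hc hx1 hF).unique (hsum.congr_of_eventuallyEq heq)]

lemma hypLogDeriv_zero_middle (a c x : ℝ) : hypLogDeriv a 0 c x = 0 := by
  have hDa : hypDa a 0 c x = 0 := by
    rw [hypDa, tsum_eq_single 0]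
    · simp [shiftedHarmonic_zero]
    · intro n hn
      obtain ⟨n, rfl⟩ := Nat.exists_eq_succ_of_ne_zero hn
      simp [hypCoeff, risingFactorial_succ_left]
  rw [hypLogDeriv, hDa, zero_div]

end EulerReflection

section CutoffRoots

open Topology

variable {θ ν x : ℝ} {k : ℕ}

/-- The logarithmic derivative of `F(·, ν + k, θ + k, x)` at `k`; by Euler's transformation `α_k` is
the point where it takes the value `1 / θ`. -/
noncomputable def cutoffFun (θ ν : ℝ) (k : ℕ) (x : ℝ) : ℝ := hypLogDeriv k (ν + k) (θ + k) x

lemma dalogF_eq_hypLogDeriv (hθ : 0 < θ) (hν : 0 < ν) (hk : 1 ≤ k) (hx : x ∈ Set.Ioo 0 1) :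
    DalogF θ ν k x = hypLogDeriv θ (θ - ν) (θ + k) x := by
  have hk0 : (0 : ℝ) < k := Nat.cast_pos.2 hk
  have hF := hypF_pos_of_lt (a := θ) (b := θ - ν) (c := θ + k) (by positivity) (by linarith)
    (by linarith) ⟨hx.1.le, hx.2⟩
  exact (hasDerivAt_log_hypF hθ (by positivity) ((abs_of_pos hx.1).trans_lt hx.2) hF.ne').deriv

lemma cutoffFun_eq (hθ : 0 < θ) (hν : 0 < ν) (hk : 1 ≤ k) (hx : x ∈ Set.Ioo 0 1) :
    cutoffFun θ ν k x = -Real.log (1 - x) - hypLogDeriv θ (θ - ν) (θ + k) x := by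
  have hk0 : (0 : ℝ) < k := Nat.cast_pos.2 hk
  have h := hypLogDeriv_eq_neg_log_sub (a := θ) (b := θ - ν) (c := θ + k) hθ (by linarith)
    (by linarith) ⟨hx.1.le, hx.2⟩
  rw [show θ + k - θ = (k : ℝ) by ring, show θ + k - (θ - ν) = ν + k by ring] at h
  rw [cutoffFun, h]
  ring

lemma dalogF_eq_iff (hθ : 0 < θ) (hν : 0 < ν) (hk : 1 ≤ k) (hx : x ∈ Set.Ioo 0 1) :
    DalogF θ ν k x = -1 / θ - Real.log (1 - x) ↔ cutoffFun θ ν k x = θ⁻¹ := by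
  rw [dalogF_eq_hypLogDeriv hθ hν hk hx, cutoffFun_eq hθ hν hk hx, neg_div, one_div]
  constructor <;> intro h <;> linarith

lemma strictMonoOn_cutoffFun (hθ : 0 < θ) (hν : 0 < ν) (hk : 1 ≤ k) :
    StrictMonoOn (cutoffFun θ ν k) (Set.Ioo 0 1) :=
  strictMonoOn_hypLogDeriv (Nat.cast_pos.2 hk) (by positivity) (by positivity)

lemma exists_cutoffFun_eq (hθ : 0 < θ) (hν : 0 < ν) (hk : 1 ≤ k) :
    ∃ x ∈ Set.Ioo (0 : ℝ) 1, cutoffFun θ ν k x = θ⁻¹ := by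
  have hk1 : (1 : ℝ) ≤ k := by exact_mod_cast hk
  simpa [cutoffFun] using exists_hypLogDeriv_eq (a := k) (b := ν + k) (c := θ + k)
    (by linarith) (by linarith) (by linarith)

lemma mul_cutoffFun_sub_pos (hθ : 0 < θ) (hν : 0 < ν) (hne : ν ≠ θ) (hk : 1 ≤ k)
    (hx : x ∈ Set.Ioo 0 1) :
    0 < (ν - θ) * (cutoffFun θ ν k x - cutoffFun θ ν (k + 1) x) := by
  simpa [cutoffFun, add_assoc] using mul_hypLogDeriv_sub_pos (a := k) (b := ν + k) (c := θ + k)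
    (Nat.cast_pos.2 hk) (by positivity) (by positivity) (by simpa using hne) hx

lemma strictMonoOn_neg_log_one_sub :
    StrictMonoOn (fun x : ℝ ↦ -Real.log (1 - x)) (Set.Ioo 0 1) := fun _ _ _ hy hxy ↦
  neg_lt_neg (Real.log_lt_log (sub_pos.2 hy.2) (sub_lt_sub_left hxy 1))

lemma neg_log_one_sub_eq_inv_iff (hx : x < 1) :
    -Real.log (1 - x) = θ⁻¹ ↔ x = 1 - Real.exp (-1 / θ) := by
  rw [neg_eq_iff_eq_neg, inv_eq_one_div, ← neg_div, ← Real.log_exp (-1 / θ),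
    Real.log_injOn_pos.eq_iff (sub_pos.2 hx) (Real.exp_pos _), Real.log_exp, sub_eq_iff_eq_add',
    eq_sub_iff_add_eq, eq_comm]

lemma tendsto_cutoffFun (hθ : 0 < θ) (hν : 0 < ν) (hx : x ∈ Set.Ioo 0 1) :
    Tendsto (fun k ↦ cutoffFun θ ν k x) atTop (𝓝 (-Real.log (1 - x))) := by
  have hc : Tendsto (fun k : ℕ ↦ θ + (k : ℝ)) atTop atTop :=
    tendsto_atTop_add_const_left _ θ tendsto_natCast_atTop_atTop
  have hlim := ((tendsto_hypLogDeriv_atTop hθ (θ - ν)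
    ((abs_of_pos hx.1).trans_lt hx.2)).comp hc).const_sub (-Real.log (1 - x))
  rw [sub_zero] at hlim
  refine hlim.congr' ?_
  filter_upwards [eventually_ge_atTop 1] with k hk using (cutoffFun_eq hθ hν hk hx).symm

lemma tendsto_of_cutoffFun_eq (hθ : 0 < θ) (hν : 0 < ν) {α : ℕ → ℝ}
    (hα : ∀ k ≥ 1, α k ∈ Set.Ioo 0 1 ∧ cutoffFun θ ν k (α k) = θ⁻¹) :
    Tendsto α atTop (𝓝 (1 - Real.exp (-1 / θ))) := by
  have hexp : Real.exp (-1 / θ) < 1 := Real.exp_lt_one_iff.2 (div_neg_of_neg_of_pos (by simp) hθ)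
  have hlimit : 1 - Real.exp (-1 / θ) ∈ Set.Ioo 0 1 :=
    ⟨sub_pos.2 hexp, sub_lt_self 1 (Real.exp_pos _)⟩
  refine tendsto_root_of_strictMonoOn ?_ strictMonoOn_neg_log_one_sub
    (fun x hx ↦ tendsto_cutoffFun hθ hν hx) ((eventually_ge_atTop 1).mono hα) hlimit
    ((neg_log_one_sub_eq_inv_iff hlimit.2).2 rfl)
  exact (eventually_ge_atTop 1).mono fun k hk ↦ strictMonoOn_cutoffFun hθ hν hk

end CutoffRoots

/-- For each `k ≥ 1` the equation
`D_a log F(θ, θ-ν, θ+k, x) = -1/θ - log(1-x)` has a unique root `α_k` in `(0,1)`;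
`(α_k)` is strictly increasing to `α* = 1 - e^{-1/θ}` if `ν > θ`, strictly
decreasing to `α*` if `ν < θ`, and constantly `α*` if `ν = θ`. -/
theorem stmt9 (θ ν : ℝ) (hθ : 0 < θ) (hν : 0 < ν) :
    ∃ α : ℕ → ℝ,
      (∀ k : ℕ, 1 ≤ k →
        α k ∈ Set.Ioo (0 : ℝ) 1 ∧
        DalogF θ ν k (α k) = -1 / θ - Real.log (1 - α k) ∧
        ∀ x ∈ Set.Ioo (0 : ℝ) 1,
          DalogF θ ν k x = -1 / θ - Real.log (1 - x) → x = α k) ∧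
      (θ < ν →
        (∀ k : ℕ, 1 ≤ k → α k < α (k + 1)) ∧
          Tendsto α atTop (nhds (1 - Real.exp (-1 / θ)))) ∧
      (ν < θ →
        (∀ k : ℕ, 1 ≤ k → α (k + 1) < α k) ∧
          Tendsto α atTop (nhds (1 - Real.exp (-1 / θ)))) ∧
      (ν = θ → ∀ k : ℕ, 1 ≤ k → α k = 1 - Real.exp (-1 / θ)) := by
  choose! α hα hroot using fun k (hk : 1 ≤ k) ↦ exists_cutoffFun_eq hθ hν hk
  have hlim := tendsto_of_cutoffFun_eq hθ hν fun k hk ↦ ⟨hα k hk, hroot k hk⟩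
  have hmono {k : ℕ} (hk : 1 ≤ k) := strictMonoOn_cutoffFun hθ hν hk
  have hnext {k : ℕ} (hk : 1 ≤ k) := hroot (k + 1) (Nat.le_succ_of_le hk)
  have hstep {k : ℕ} (hk : 1 ≤ k) (hne : ν ≠ θ) := mul_cutoffFun_sub_pos hθ hν hne hk (hα k hk)
  refine ⟨α, fun k hk ↦ ⟨hα k hk, (dalogF_eq_iff hθ hν hk (hα k hk)).2 (hroot k hk), ?_⟩,
    fun h ↦ ⟨fun k hk ↦ ?_, hlim⟩, fun h ↦ ⟨fun k hk ↦ ?_, hlim⟩, ?_⟩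
  · intro x hx heq
    have hx_root := (dalogF_eq_iff hθ hν hk hx).1 heq
    exact (hmono hk).injOn hx (hα k hk) (hx_root.trans (hroot k hk).symm)
  · have hlt := pos_of_mul_pos_right (hstep hk h.ne') (sub_pos.2 h).le
    rw [hroot k hk, ← hnext hk, sub_pos] at hlt
    exact ((hmono (Nat.le_succ_of_le hk)).lt_iff_lt (hα k hk) (hα _ (Nat.le_succ_of_le hk))).1 hlt
  · have hlt := neg_of_mul_pos_right (hstep hk h.ne) (sub_neg.2 h).le
    rw [hroot k hk, ← hnext hk, sub_neg] at hlt
    exact ((hmono (Nat.le_succ_of_le hk)).lt_iff_lt (hα _ (Nat.le_succ_of_le hk)) (hα k hk)).1 hlt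
  · rintro rfl k hk
    have hk_root := hroot k hk
    rw [cutoffFun_eq hθ hν hk (hα k hk), sub_self, hypLogDeriv_zero_middle, sub_zero] at hk_root
    exact (neg_log_one_sub_eq_inv_iff (hα k hk).2).1 hk_root
end
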